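/- arXiv:1202.4045 — 2 statements merged into one kernel-verified Lean document; each statement's English description precedes it below -/
import Mathlib

section
/- Let P be a simple polytope of dimension d > 1 that has at least one pair of complementary vertices. Then there exist vertices z, z', v of P such that z and z' are adjacent, the pair {z, v} is complementary, and the vertices z' and v lie on exactly one common facet of P. -/
/-! The argument runs along an `f`-increasing edge path towards `v`.

Fix a complementary pair `{u, v}` and a functional `f` whose maximum over `P` is attained at `v`
only.  Among the vertices complementary to `v` let `z` maximise `f`.  Since `P` is simple, `z` is
not `v`, and the simplex-method step (`exists_better_neighbour`) yields an adjacent vertex `z'`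
with `f z < f z'` which lies on all but one of the `d` facets through `z`.  By the choice of `z`,
the vertices `z'` and `v` share a facet.  No facet through `z` contains `v`, so at least `d - 1`
of the `d` facets through `z'` miss `v`, and the common facet is unique.

The simplex-method step is local at `z`.  Let `T` be the set of the differences `s - z`, where `s`
runs over the points generating `P`.  The facets through `z` correspond to the functionals that are
nonpositive on `T` and whose zeros in `T` span a hyperplane of `span T` (`IsExt`).  For
every functional that is nonpositive and not identically zero on `T`, some extreme one vanishes
wherever it does (`exists_isExt`); subtracting multiples of extreme ones shows that they generate
all functionals nonpositive on `T` (`generate`).  As `P` is simple, there are only `d` extreme ones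
up to scaling, and as `z` is a vertex, they separate the points of `span T`.  So they are coordinates
on `span T`, and the dual basis gives the edge directions at `z` (`simplicial_cone`).
-/

/-- `P` is a polytope: the convex hull of finitely many points. -/
def IsPolytope {n : ℕ} (P : Set (Fin n → ℝ)) : Prop :=
  ∃ S : Finset (Fin n → ℝ), P = convexHull ℝ (S : Set (Fin n → ℝ))

/-- A face of `P`: the empty set, `P` itself, or the intersection of `P`
with a supporting hyperplane. -/
def IsFace {n : ℕ} (P F : Set (Fin n → ℝ)) : Prop :=
  F = ∅ ∨ F = P ∨ ∃ (f : (Fin n → ℝ) →ₗ[ℝ] ℝ) (c : ℝ),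
    (∀ x ∈ P, f x ≤ c) ∧ F = {x ∈ P | f x = c}

/-- The dimension of a subset of `ℝⁿ`: the rank of its vector span
(i.e., its affine dimension). -/
noncomputable def sdim {n : ℕ} (F : Set (Fin n → ℝ)) : ℕ :=
  Module.finrank ℝ ↥(vectorSpan ℝ F)

/-- A vertex of `P`: a point whose singleton is a (0-dimensional) face of `P`. -/
def IsVertex {n : ℕ} (P : Set (Fin n → ℝ)) (v : Fin n → ℝ) : Prop :=
  IsFace P {v}

/-- A facet of `P`: a nonempty face of dimension `dim P - 1`. -/
def IsFacet {n : ℕ} (P F : Set (Fin n → ℝ)) : Prop :=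
  IsFace P F ∧ F.Nonempty ∧ sdim F + 1 = sdim P

/-- An edge of `P`: a face of dimension 1. -/
def IsEdge {n : ℕ} (P F : Set (Fin n → ℝ)) : Prop :=
  IsFace P F ∧ sdim F = 1

/-- Two vertices are adjacent if they are joined by an edge. -/
def Adjacent {n : ℕ} (P : Set (Fin n → ℝ)) (u v : Fin n → ℝ) : Prop :=
  u ≠ v ∧ ∃ F, IsEdge P F ∧ u ∈ F ∧ v ∈ F

/-- A polytope is simple if every vertex belongs to precisely `dim P` facets. -/
def IsSimplePolytope {n : ℕ} (P : Set (Fin n → ℝ)) : Prop :=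
  ∀ v, IsVertex P v → {F | IsFacet P F ∧ v ∈ F}.ncard = sdim P

/-- A polytope is simplicial if every facet contains precisely `dim P` vertices. -/
def IsSimplicialPolytope {n : ℕ} (P : Set (Fin n → ℝ)) : Prop :=
  ∀ F, IsFacet P F → {v | IsVertex P v ∧ v ∈ F}.ncard = sdim P

/-- Two vertices are complementary if no facet contains both. -/
def Complementary {n : ℕ} (P : Set (Fin n → ℝ)) (u v : Fin n → ℝ) : Prop :=
  ∀ F, IsFacet P F → ¬ (u ∈ F ∧ v ∈ F)

/-- `J` is the join `F ∨ G`: the smallest face of `P` containing both `F` and `G`. -/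
def IsJoin {n : ℕ} (P F G J : Set (Fin n → ℝ)) : Prop :=
  IsFace P J ∧ F ⊆ J ∧ G ⊆ J ∧ ∀ J', IsFace P J' → F ⊆ J' → G ⊆ J' → J ⊆ J'

/-! ### Functionals that are nonpositive on a finite set -/

section Cone

/-- The ratio test: increase `c` until some inequality `f t + c * g t ≤ 0` becomes tight. -/
lemma ratio_test {V : Type*} (T : Finset V) (f g : V → ℝ) (hf : ∀ t ∈ T, f t ≤ 0)
    (hg : ∀ t ∈ T, f t = 0 → g t ≤ 0) (hpos : ∃ t ∈ T, 0 < g t) :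
    ∃ c : ℝ, 0 < c ∧ (∀ t ∈ T, f t + c * g t ≤ 0) ∧ ∃ t ∈ T, 0 < g t ∧ f t + c * g t = 0 := by
  classical
  obtain ⟨t0, ht0, hgt0⟩ := hpos
  obtain ⟨m, hm, hmin⟩ := (T.filter (fun t => 0 < g t)).exists_min_image
    (fun t => -f t / g t) ⟨t0, by simp [ht0, hgt0]⟩
  rw [Finset.mem_filter] at hm
  obtain ⟨hmT, hgm⟩ := hm
  have hfm : f m < 0 := lt_of_le_of_ne (hf m hmT) fun h => by
    have := hg m hmT h
    linarith
  have hc : 0 < -f m / g m := div_pos (by linarith) hgm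
  refine ⟨-f m / g m, hc, fun t ht => ?_, m, hmT, hgm, by field_simp; ring⟩
  by_cases h : 0 < g t
  · have h1 := hmin t (by simp [ht, h])
    have h2 := (le_div_iff₀ h).1 h1
    linarith
  · have h1 := hf t ht
    have h2 := mul_nonpos_of_nonneg_of_nonpos hc.le (not_lt.1 h)
    linarith

lemma small_step {V : Type*} (T : Finset V) (f g : V → ℝ) (hf : ∀ t ∈ T, f t ≤ 0)
    (hg : ∀ t ∈ T, f t = 0 → g t ≤ 0) :
    ∃ c : ℝ, 0 < c ∧ ∀ t ∈ T, f t + c * g t ≤ 0 := by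
  by_cases h : ∃ t ∈ T, 0 < g t
  · obtain ⟨c, hc, h1, -⟩ := ratio_test T f g hf hg h
    exact ⟨c, hc, h1⟩
  · push Not at h
    refine ⟨1, one_pos, fun t ht => ?_⟩
    have := h t ht
    have := hf t ht
    linarith

variable {V : Type*} [AddCommGroup V] [Module ℝ V]

/-- `f` is nonpositive on `T`, not identically zero on `T`, and its zeros in `T` span a hyperplane
of `span T`: such an `f` spans an extreme ray of the cone of functionals nonpositive on `T`. -/
def IsExt (T : Finset V) (f : V →ₗ[ℝ] ℝ) : Prop :=
  (∀ t ∈ T, f t ≤ 0) ∧ (∃ t ∈ T, f t < 0) ∧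
    Module.finrank ℝ (Submodule.span ℝ {t | t ∈ T ∧ f t = 0}) + 1 =
      Module.finrank ℝ (Submodule.span ℝ (T : Set V))

lemma finrank_tight_lt [FiniteDimensional ℝ V] (T : Finset V) (f : V →ₗ[ℝ] ℝ) {t1 : V}
    (hf1 : f t1 < 0) :
    Module.finrank ℝ (Submodule.span ℝ {t | t ∈ T ∧ f t = 0}) + 1 ≤
      Module.finrank ℝ (Submodule.span ℝ {t | t ∈ T ∧ f t = 0} ⊔ Submodule.span ℝ {t1} :
        Submodule ℝ V) := by
  apply Nat.succ_le_of_lt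
  apply Submodule.finrank_lt_finrank_of_lt
  refine lt_of_le_of_ne le_sup_left fun h => ?_
  have h1 : t1 ∈ Submodule.span ℝ {t | t ∈ T ∧ f t = 0} := by
    rw [h]
    exact Submodule.mem_sup_right (Submodule.mem_span_singleton_self t1)
  have h2 : Submodule.span ℝ {t | t ∈ T ∧ f t = 0} ≤ LinearMap.ker f :=
    Submodule.span_le.2 fun t ht => ht.2
  have h3 : f t1 = 0 := h2 h1
  linarith

lemma tight_sup_le (T : Finset V) (f : V →ₗ[ℝ] ℝ) {t1 : V} (ht1 : t1 ∈ T) :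
    (Submodule.span ℝ {t | t ∈ T ∧ f t = 0} ⊔ Submodule.span ℝ {t1} : Submodule ℝ V) ≤
      Submodule.span ℝ (T : Set V) :=
  sup_le (Submodule.span_mono fun _ ht => ht.1)
    (Submodule.span_mono (Set.singleton_subset_iff.2 ht1))

/-- Every proper face containing the apex lies in a facet: if the zeros of `f` do not yet span a hyperplane, tilting `f`
about them gains a further zero. -/
lemma exists_isExt [FiniteDimensional ℝ V] (T : Finset V) (f : V →ₗ[ℝ] ℝ)
    (hf : ∀ t ∈ T, f t ≤ 0) (hne : ∃ t ∈ T, f t < 0) :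
    ∃ f', IsExt T f' ∧ ∀ t ∈ T, f t = 0 → f' t = 0 := by
  classical
  induction hk : (T.filter (fun t => f t ≠ 0)).card using Nat.strong_induction_on
    generalizing f with
  | _ k ih =>
  obtain ⟨t1, ht1, hf1⟩ := hne
  have hlt := finrank_tight_lt T f hf1
  have hsup := tight_sup_le T f ht1
  by_cases hU : (Submodule.span ℝ {t | t ∈ T ∧ f t = 0} ⊔ Submodule.span ℝ {t1} :
      Submodule ℝ V) = Submodule.span ℝ (T : Set V)
  · refine ⟨f, ⟨hf, ⟨t1, ht1, hf1⟩, ?_⟩, fun t _ h => h⟩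
    have h1 := Submodule.finrank_add_le_finrank_add_finrank
      (Submodule.span ℝ {t | t ∈ T ∧ f t = 0}) (Submodule.span ℝ {t1})
    have h2 := finrank_span_le_card (R := ℝ) ({t1} : Set V)
    simp only [Set.toFinset_singleton, Finset.card_singleton] at h2
    rw [hU] at h1 hlt
    omega
  · obtain ⟨t2, ht2, hn⟩ : ∃ t2 ∈ T, t2 ∉ (Submodule.span ℝ {t | t ∈ T ∧ f t = 0} ⊔
        Submodule.span ℝ {t1} : Submodule ℝ V) := by
      by_contra! h
      exact hU (le_antisymm hsup (Submodule.span_le.2 h))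
    obtain ⟨g0, hg0, hker⟩ := Submodule.exists_le_ker_of_notMem hn
    obtain ⟨g, hg2, hg⟩ : ∃ g : V →ₗ[ℝ] ℝ, 0 < g t2 ∧
        (Submodule.span ℝ {t | t ∈ T ∧ f t = 0} ⊔ Submodule.span ℝ {t1} : Submodule ℝ V) ≤
          LinearMap.ker g := by
      rcases lt_or_gt_of_ne hg0 with h | h
      · exact ⟨-g0, by simpa using h, by simpa using hker⟩
      · exact ⟨g0, h, hker⟩
    have hgz : ∀ t ∈ T, f t = 0 → g t = 0 := fun t ht h =>
      hg (Submodule.mem_sup_left (Submodule.subset_span ⟨ht, h⟩))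
    have hg1 : g t1 = 0 := hg (Submodule.mem_sup_right (Submodule.mem_span_singleton_self t1))
    obtain ⟨c, hc, hle, t3, ht3, hg3, h3⟩ := ratio_test T f g hf
      (fun t ht h => (hgz t ht h).le) ⟨t2, ht2, hg2⟩
    have hcard : (T.filter (fun t => (f + c • g) t ≠ 0)).card < k := by
      rw [← hk]
      apply Finset.card_lt_card
      rw [Finset.ssubset_iff_of_subset]
      · refine ⟨t3, ?_, ?_⟩
        · simp only [Finset.mem_filter]
          exact ⟨ht3, fun h => by have := hgz t3 ht3 h; linarith⟩
        · simp [h3]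
      · intro t
        simp only [Finset.mem_filter]
        rintro ⟨ht, h⟩
        refine ⟨ht, fun h0 => h ?_⟩
        simp [h0, hgz t ht h0]
    obtain ⟨f', hf', hz⟩ := ih _ hcard (f + c • g) (by simpa using hle)
      ⟨t1, ht1, by simpa [hg1] using hf1⟩ rfl
    exact ⟨f', hf', fun t ht h => hz t ht (by simp [h, hgz t ht h])⟩

/-- Two functionals defining the same facet are positively proportional. -/
lemma IsExt.proportional [FiniteDimensional ℝ V] {T : Finset V} {f g : V →ₗ[ℝ] ℝ}
    (hf : IsExt T f) (hg : ∀ t ∈ T, g t ≤ 0) (h : ∀ t ∈ T, f t = 0 ↔ g t = 0) :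
    ∃ c : ℝ, 0 < c ∧ ∀ t ∈ T, f t = c * g t := by
  obtain ⟨-, ⟨t1, ht1, hf1⟩, hr⟩ := hf
  have hg1 : g t1 < 0 := lt_of_le_of_ne (hg t1 ht1) fun h0 => by
    have := (h t1 ht1).2 h0
    linarith
  refine ⟨f t1 / g t1, div_pos_of_neg_of_neg hf1 hg1, ?_⟩
  have hlt := finrank_tight_lt T f hf1
  have hU := Submodule.eq_of_le_of_finrank_le (tight_sup_le T f ht1) (by omega)
  have hker : Submodule.span ℝ (T : Set V) ≤ LinearMap.ker (f - (f t1 / g t1) • g) := by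
    rw [← hU]
    refine sup_le (Submodule.span_le.2 ?_) (Submodule.span_le.2 ?_)
    · rintro t ⟨ht, h0⟩
      simp [h0, (h t ht).1 h0]
    · rintro t rfl
      simp [hg1.ne]
  intro t ht
  have h1 : (f - (f t1 / g t1) • g) t = 0 := hker (Submodule.subset_span ht)
  simp only [LinearMap.sub_apply, LinearMap.smul_apply, smul_eq_mul] at h1
  linarith

/-- A family containing a positive multiple of each extreme functional generates the functionals
nonpositive on `T`: subtracting from `f` the largest admissible multiple of an extreme functional
gains a further zero. -/
lemma generate [FiniteDimensional ℝ V] {ι : Type*} [Fintype ι] (T : Finset V)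
    (φ : ι → V →ₗ[ℝ] ℝ)
    (hφ : ∀ f, IsExt T f → ∃ i, ∃ c : ℝ, 0 < c ∧ ∀ t ∈ T, f t = c * φ i t)
    (f : V →ₗ[ℝ] ℝ) (hf : ∀ t ∈ T, f t ≤ 0) :
    ∃ c : ι → ℝ, (∀ i, 0 ≤ c i) ∧ ∀ t ∈ T, f t = ∑ i, c i * φ i t := by
  classical
  induction hk : (T.filter (fun t => f t ≠ 0)).card using Nat.strong_induction_on
    generalizing f with
  | _ k ih =>
  by_cases hne : ∃ t ∈ T, f t < 0
  · obtain ⟨f', hf', hz⟩ := exists_isExt T f hf hne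
    obtain ⟨t1, ht1, hf1⟩ := hf'.2.1
    obtain ⟨i, b, hb, hfi⟩ := hφ f' hf'
    obtain ⟨c, hc, hle, t3, ht3, hg3, h3⟩ := ratio_test T f (-f') hf
      (fun t ht h => by simp [hz t ht h]) ⟨t1, ht1, by simpa using hf1⟩
    have hcard : (T.filter (fun t => (f + c • (-f')) t ≠ 0)).card < k := by
      rw [← hk]
      apply Finset.card_lt_card
      rw [Finset.ssubset_iff_of_subset]
      · refine ⟨t3, ?_, ?_⟩
        · simp only [Finset.mem_filter]
          exact ⟨ht3, fun h => by have := hz t3 ht3 h; simp [this] at hg3⟩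
        · simpa using fun _ => h3
      · intro t
        simp only [Finset.mem_filter]
        rintro ⟨ht, h⟩
        refine ⟨ht, fun h0 => h ?_⟩
        simp [h0, hz t ht h0]
    obtain ⟨a, ha, hfa⟩ := ih _ hcard (f + c • (-f')) (by simpa using hle) rfl
    refine ⟨fun l => a l + if l = i then c * b else 0, fun l => ?_, fun t ht => ?_⟩
    · have := ha l
      dsimp only
      split_ifs <;> positivity
    · have h1 := hfa t ht
      have h2 := hfi t ht
      simp only [add_mul, Finset.sum_add_distrib, ite_mul, zero_mul, Finset.sum_ite_eq',
        Finset.mem_univ, if_true]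
      rw [← h1, mul_assoc, ← h2]
      simp
  · push Not at hne
    exact ⟨0, fun _ => le_rfl, fun t ht => by simp [le_antisymm (hf t ht) (hne t ht)]⟩

/-- If the cone generated by `T` is pointed (witnessed by `h`) and has, up to scaling, at most
`dim (span T)` extreme functionals, all among the `φ i`, then it is simplicial.  A functional `f`
that is positive somewhere on `T` is then positive at a point of `T` on some line `ℝ e`, the one
in `span T` where all `φ i` but one vanish. -/
lemma simplicial_cone [FiniteDimensional ℝ V] {ι : Type*} [Fintype ι] (T : Finset V)
    (φ : ι → V →ₗ[ℝ] ℝ) (hcard : Fintype.card ι = Module.finrank ℝ (Submodule.span ℝ (T : Set V)))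
    (hφ0 : ∀ i, ∀ t ∈ T, φ i t ≤ 0)
    (hφ : ∀ f, IsExt T f → ∃ i, ∃ c : ℝ, 0 < c ∧ ∀ t ∈ T, f t = c * φ i t)
    (h : V →ₗ[ℝ] ℝ) (hh : ∀ t ∈ T, t ≠ 0 → h t < 0)
    (f : V →ₗ[ℝ] ℝ) (t0 : V) (ht0 : t0 ∈ T) (hf : 0 < f t0) :
    ∃ (j : ι) (e : V), 0 < f e ∧
      (∀ w ∈ Submodule.span ℝ (T : Set V), (∀ i, i ≠ j → φ i w = 0) → ∃ a : ℝ, w = a • e) ∧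
      ∃ t ∈ T, 0 < f t ∧ ∀ i, i ≠ j → φ i t = 0 := by
  classical
  set W := Submodule.span ℝ (T : Set V) with hW
  have hgen : ∀ p : V →ₗ[ℝ] ℝ, (∀ t ∈ T, p t ≤ 0) →
      ∃ c : ι → ℝ, (∀ i, 0 ≤ c i) ∧ ∀ w ∈ W, p w = ∑ i, c i * φ i w := by
    intro p hp
    obtain ⟨c, hc, hpc⟩ := generate T φ hφ p hp
    refine ⟨c, hc, fun w hw => ?_⟩
    have : W ≤ LinearMap.ker (p - ∑ i, c i • φ i) := by
      refine Submodule.span_le.2 fun t ht => ?_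
      simp [hpc t ht]
    have h1 : (p - ∑ i, c i • φ i) w = 0 := this hw
    simpa [sub_eq_zero] using h1
  have hinj : ∀ w ∈ W, (∀ i, φ i w = 0) → w = 0 := by
    intro w hw h0
    by_contra hw0
    obtain ⟨p, hp, -⟩ := Submodule.exists_le_ker_of_notMem (K := ℝ)
      (p := (⊥ : Submodule ℝ V)) (v := w)
      (by simpa using hw0)
    have hh' : ∀ t ∈ T, h t ≤ 0 := fun t ht => by
      by_cases h0 : t = 0
      · simp [h0]
      · exact (hh t ht h0).le
    -- `h` is interior to the cone, so `h + c • p` stays in it for small `c`.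
    obtain ⟨c, hc, hle⟩ := small_step T h p hh' fun t ht h0 => by
      by_cases h1 : t = 0
      · simp [h1]
      · have := hh t ht h1
        linarith
    obtain ⟨a, -, ha⟩ := hgen h hh'
    obtain ⟨b, -, hb⟩ := hgen (h + c • p) (by simpa using hle)
    have h1 := ha w hw
    have h2 := hb w hw
    simp only [h0, mul_zero, Finset.sum_const_zero] at h1 h2
    simp [h1, hc.ne', hp] at h2
  let Φ : W →ₗ[ℝ] (ι → ℝ) := (LinearMap.pi φ).comp W.subtype
  have hΦinj : Function.Injective Φ := by
    rw [← LinearMap.ker_eq_bot, LinearMap.ker_eq_bot']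
    intro w hw
    exact Subtype.ext (hinj w w.2 fun i => congrFun hw i)
  have hΦsurj : Function.Surjective Φ :=
    (LinearMap.injective_iff_surjective_of_finrank_eq_finrank (by simp [hcard])).1 hΦinj
  have hex : ∀ j : ι, ∃ e ∈ W, ∀ i, φ i e = if i = j then -1 else 0 := by
    intro j
    obtain ⟨e, he⟩ := hΦsurj (fun i => if i = j then -1 else 0)
    exact ⟨e, e.2, fun i => congrFun he i⟩
  choose e heW he using hex
  have hline : ∀ j, ∀ w ∈ W, (∀ i, i ≠ j → φ i w = 0) → w = (-φ j w) • e j := by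
    intro j w hw h0
    rw [← sub_eq_zero]
    refine hinj _ (W.sub_mem hw (W.smul_mem _ (heW j))) fun i => ?_
    by_cases hij : i = j
    · subst hij
      simp [he]
    · simp [he, hij, h0 i hij]
  have ht0W : t0 ∈ W := Submodule.subset_span ht0
  have hdec : t0 = ∑ j, (-φ j t0) • e j := by
    rw [← sub_eq_zero]
    refine hinj _ (W.sub_mem ht0W (W.sum_mem fun j _ => W.smul_mem _ (heW j))) fun i => ?_
    simp [he]
  obtain ⟨j, hj⟩ : ∃ j, 0 < f (e j) := by
    by_contra! hneg
    rw [hdec, map_sum] at hf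
    have : ∑ j, f ((-φ j t0) • e j) ≤ 0 := Finset.sum_nonpos fun j _ => by
      rw [map_smul, smul_eq_mul]
      exact mul_nonpos_of_nonneg_of_nonpos (by linarith [hφ0 j t0 ht0]) (hneg j)
    linarith
  refine ⟨j, e j, hj, fun w hw h0 => ⟨_, hline j w hw h0⟩, ?_⟩
  have hg : ∀ t, (∑ i ∈ Finset.univ.erase j, φ i) t = ∑ i ∈ Finset.univ.erase j, φ i t := by
    intro t
    simp
  obtain ⟨t, ht, htz, htj⟩ : ∃ t ∈ T, (∀ i, i ≠ j → φ i t = 0) ∧ φ j t < 0 := by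
    by_contra! hno
    -- Otherwise the sum over `i ≠ j` could be decreased by a multiple of `φ j`
    -- within the cone, against the uniqueness of coordinates.
    obtain ⟨c, hc, hle⟩ := small_step T (⇑(∑ i ∈ Finset.univ.erase j, φ i)) (⇑(-φ j))
      (fun t ht => (hg t).trans_le (Finset.sum_nonpos fun i _ => hφ0 i t ht))
      (fun t ht h0 => by
        replace h0 := (hg t).symm.trans h0
        rw [Finset.sum_eq_zero_iff_of_nonpos fun i _ => hφ0 i t ht] at h0
        have := hno t ht fun i hi => h0 i (by simp [hi])
        simpa using this)
    obtain ⟨a, ha, hs⟩ := hgen (∑ i ∈ Finset.univ.erase j, φ i + c • (-φ j)) (by simpa using hle)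
    have h1 := hs (e j) (heW j)
    have h2 : ∑ i ∈ Finset.univ.erase j, φ i (e j) = 0 :=
      Finset.sum_eq_zero fun i hi => by simp [he, Finset.ne_of_mem_erase hi]
    rw [LinearMap.add_apply, hg, h2] at h1
    simp [he] at h1
    have := ha j
    linarith
  refine ⟨t, ht, ?_, htz⟩
  rw [hline j t (Submodule.subset_span ht) htz, map_smul, smul_eq_mul]
  exact mul_pos (by linarith) hj

end Cone

/-! ### Faces of the convex hull of a finite set -/

section Polytope

variable {n : ℕ}

/-- A supporting hyperplane meets `conv S` in the convex hull of its intersection with `S`. -/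
lemma mem_hull_tight (S : Finset (Fin n → ℝ)) (f : (Fin n → ℝ) →ₗ[ℝ] ℝ) (c : ℝ)
    (hS : ∀ s ∈ S, f s ≤ c) {x : Fin n → ℝ} (hx : x ∈ convexHull ℝ (S : Set (Fin n → ℝ))) :
    f x ≤ c ∧ (f x = c → x ∈ convexHull ℝ {s | s ∈ S ∧ f s = c}) := by
  suffices h : convexHull ℝ (S : Set (Fin n → ℝ)) ⊆
      {x | f x ≤ c ∧ (f x = c → x ∈ convexHull ℝ {s | s ∈ S ∧ f s = c})} from h hx
  refine convexHull_min (fun s hs => ⟨hS s hs, fun h => subset_convexHull ℝ _ ⟨hs, h⟩⟩) ?_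
  rw [convex_iff_forall_pos]
  rintro x ⟨hx1, hx2⟩ y ⟨hy1, hy2⟩ a b ha hb hab
  have e : f (a • x + b • y) = a * f x + b * f y := by simp
  have h1 := mul_le_mul_of_nonneg_left hx1 ha.le
  have h2 := mul_le_mul_of_nonneg_left hy1 hb.le
  have h3 : a * c + b * c = c := by rw [← add_mul, hab, one_mul]
  refine ⟨by rw [e]; linarith, fun h => ?_⟩
  rw [e] at h
  have hx3 : f x = c := mul_left_cancel₀ ha.ne' (by linarith)
  have hy3 : f y = c := mul_left_cancel₀ hb.ne' (by linarith)
  exact convex_convexHull ℝ _ (hx2 hx3) (hy2 hy3) ha.le hb.le hab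

lemma IsVertex.exists_functional {P : Set (Fin n → ℝ)} {v : Fin n → ℝ} (hv : IsVertex P v) :
    v ∈ P ∧ ∃ f : (Fin n → ℝ) →ₗ[ℝ] ℝ, ∀ x ∈ P, x ≠ v → f x < f v := by
  rcases hv with h | h | ⟨f, c, hle, h⟩
  · exact absurd h (Set.singleton_ne_empty v)
  · rw [← h]
    exact ⟨rfl, 0, fun x hx hne => absurd hx hne⟩
  · have hv : v ∈ {x ∈ P | f x = c} := by rw [← h]; rfl
    refine ⟨hv.1, f, fun x hx hne => ?_⟩
    rw [hv.2]
    refine lt_of_le_of_ne (hle x hx) fun hc => hne ?_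
    have : x ∈ ({v} : Set (Fin n → ℝ)) := by rw [h]; exact ⟨hx, hc⟩
    exact this

lemma IsVertex.mem {S : Finset (Fin n → ℝ)} {v : Fin n → ℝ}
    (hv : IsVertex (convexHull ℝ (S : Set (Fin n → ℝ))) v) : v ∈ S := by
  obtain ⟨hvP, f, hf⟩ := hv.exists_functional
  have hS : ∀ s ∈ S, f s ≤ f v := fun s hs => by
    by_cases h : s = v
    · rw [h]
    · exact (hf s (subset_convexHull ℝ _ hs) h).le
  have h := (mem_hull_tight S f (f v) hS hvP).2 rfl
  obtain ⟨s, hs, hfs⟩ := convexHull_nonempty_iff.1 ⟨v, h⟩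
  by_contra hvS
  have := hf s (subset_convexHull ℝ _ hs) (by rintro rfl; exact hvS hs)
  linarith

lemma isVertex_of_functional {S : Finset (Fin n → ℝ)} {v : Fin n → ℝ} (hv : v ∈ S)
    (f : (Fin n → ℝ) →ₗ[ℝ] ℝ) (hf : ∀ s ∈ S, s ≠ v → f s < f v) :
    IsVertex (convexHull ℝ (S : Set (Fin n → ℝ))) v := by
  have hS : ∀ s ∈ S, f s ≤ f v := fun s hs => by
    by_cases h : s = v
    · rw [h]
    · exact (hf s hs h).le
  refine Or.inr (Or.inr ⟨f, f v, fun x hx => (mem_hull_tight S f _ hS hx).1, ?_⟩)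
  apply Set.eq_of_subset_of_subset
  · rintro x rfl
    exact ⟨subset_convexHull ℝ _ hv, rfl⟩
  · rintro x ⟨hx, hfx⟩
    have h := (mem_hull_tight S f _ hS hx).2 hfx
    have hsub : {s | s ∈ S ∧ f s = f v} ⊆ {v} := by
      rintro s ⟨hs, he⟩
      by_contra hne
      exact (hf s hs hne).ne he
    have := convexHull_mono (𝕜 := ℝ) hsub h
    rwa [convexHull_singleton] at this

lemma vectorSpan_hull {A : Set (Fin n → ℝ)} {z : Fin n → ℝ} (hz : z ∈ A) :
    vectorSpan ℝ (convexHull ℝ A) = Submodule.span ℝ ((fun x => x - z) '' A) := by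
  rw [← direction_affineSpan, affineSpan_convexHull, direction_affineSpan,
    vectorSpan_eq_span_vsub_set_right ℝ hz]
  rfl

/-- The face of `conv S` cut out at `z` by `f` has as many dimensions as the zeros of `f` among the
differences `s - z`. -/
lemma sdim_face (S : Finset (Fin n → ℝ)) {z : Fin n → ℝ} (hz : z ∈ S)
    (f : (Fin n → ℝ) →ₗ[ℝ] ℝ) (hf : ∀ s ∈ S, f s ≤ f z) :
    sdim {x ∈ convexHull ℝ (S : Set (Fin n → ℝ)) | f x = f z} =
      Module.finrank ℝ (Submodule.span ℝ {t | t ∈ S.image (fun s => s - z) ∧ f t = 0}) := by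
  have h1 : {x ∈ convexHull ℝ (S : Set (Fin n → ℝ)) | f x = f z} =
      convexHull ℝ {s | s ∈ S ∧ f s = f z} := by
    apply Set.eq_of_subset_of_subset
    · rintro x ⟨hx, hfx⟩
      exact (mem_hull_tight S f _ hf hx).2 hfx
    · refine convexHull_min (fun s hs => ⟨subset_convexHull ℝ _ hs.1, hs.2⟩) ?_
      exact (convex_convexHull ℝ _).inter (convex_hyperplane f.isLinear (f z))
  have h2 : (fun x => x - z) '' {s | s ∈ S ∧ f s = f z} =
      {t | t ∈ S.image (fun s => s - z) ∧ f t = 0} := by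
    ext t
    simp only [Set.mem_image, Set.mem_ofPred_eq, Finset.mem_image]
    constructor
    · rintro ⟨s, ⟨hs, he⟩, rfl⟩
      exact ⟨⟨s, hs, rfl⟩, by simp [he]⟩
    · rintro ⟨⟨s, hs, rfl⟩, he⟩
      exact ⟨s, ⟨hs, by simpa [sub_eq_zero] using he⟩, rfl⟩
  rw [sdim, h1, vectorSpan_hull (A := {s | s ∈ S ∧ f s = f z}) ⟨hz, rfl⟩, h2]

lemma IsFacet.exists_functional {P F : Set (Fin n → ℝ)} (hF : IsFacet P F) {z : Fin n → ℝ}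
    (hz : z ∈ F) :
    ∃ f : (Fin n → ℝ) →ₗ[ℝ] ℝ, (∀ x ∈ P, f x ≤ f z) ∧ F = {x ∈ P | f x = f z} := by
  obtain ⟨h | h | ⟨f, c, hle, h⟩, hne, hd⟩ := hF
  · exact absurd h hne.ne_empty
  · rw [h] at hd
    omega
  · have hzc : f z = c := by
      rw [h] at hz
      exact hz.2
    subst hzc
    exact ⟨f, hle, h⟩

/-- The simplex-method step at a simple vertex `z`: unless `f` is maximal at `z`, some edge at `z`
leads to a vertex with a larger value of `f`, leaving only one of the facets through `z`. -/
lemma exists_better_neighbour (S : Finset (Fin n → ℝ)) {P : Set (Fin n → ℝ)}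
    (hP : P = convexHull ℝ (S : Set (Fin n → ℝ))) {z : Fin n → ℝ} (hz : IsVertex P z)
    (hd : 0 < sdim P) (hsimple : {F | IsFacet P F ∧ z ∈ F}.ncard = sdim P)
    (f : (Fin n → ℝ) →ₗ[ℝ] ℝ) {x : Fin n → ℝ} (hxS : x ∈ S) (hfx : f z < f x) :
    ∃ z', IsVertex P z' ∧ Adjacent P z z' ∧ f z < f z' ∧
      ∃ F₀, IsFacet P F₀ ∧ z ∈ F₀ ∧ ∀ F, IsFacet P F → z ∈ F → F ≠ F₀ → z' ∈ F := by
  classical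
  have hSP : ∀ s ∈ S, s ∈ P := fun s hs => by
    rw [hP]
    exact subset_convexHull ℝ _ hs
  have hzS : z ∈ S := by
    rw [hP] at hz
    exact hz.mem
  have hfin : {F | IsFacet P F ∧ z ∈ F}.Finite := Set.finite_of_ncard_pos (by omega)
  let ι := {F // F ∈ {F | IsFacet P F ∧ z ∈ F}}
  have : Fintype ι := hfin.fintype
  have hex : ∀ i : ι, ∃ g : (Fin n → ℝ) →ₗ[ℝ] ℝ,
      (∀ x ∈ P, g x ≤ g z) ∧ i.1 = {x ∈ P | g x = g z} :=
    fun i => i.2.1.exists_functional i.2.2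
  choose φ hφle hφeq using hex
  set T := S.image (fun s => s - z) with hT
  have hspan : vectorSpan ℝ P = Submodule.span ℝ (T : Set (Fin n → ℝ)) := by
    rw [hP, vectorSpan_hull (Finset.mem_coe.2 hzS), hT, Finset.coe_image]
  have hsd : sdim P = Module.finrank ℝ (Submodule.span ℝ (T : Set (Fin n → ℝ))) := by
    rw [sdim, hspan]
  have hcard : Fintype.card ι = Module.finrank ℝ (Submodule.span ℝ (T : Set (Fin n → ℝ))) := by
    rw [← hsd, ← hsimple, ← Nat.card_eq_fintype_card]
    rfl
  have hTmem : ∀ t ∈ T, z + t ∈ S := by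
    intro t ht
    obtain ⟨s, hs, rfl⟩ := Finset.mem_image.1 ht
    simpa using hs
  have hφ0 : ∀ i, ∀ t ∈ T, φ i t ≤ 0 := by
    intro i t ht
    have := hφle i _ (hSP _ (hTmem t ht))
    rw [map_add] at this
    linarith
  have hφmem : ∀ i, ∀ t ∈ T, φ i t = 0 → z + t ∈ i.1 := by
    intro i t ht h0
    rw [hφeq i]
    exact ⟨hSP _ (hTmem t ht), by simp [h0]⟩
  have hφ : ∀ g, IsExt T g → ∃ i, ∃ c : ℝ, 0 < c ∧ ∀ t ∈ T, g t = c * φ i t := by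
    intro g hg
    have hgS : ∀ s ∈ S, g s ≤ g z := by
      intro s hs
      have := hg.1 (s - z) (Finset.mem_image_of_mem _ hs)
      rw [map_sub] at this
      linarith
    have hgP : ∀ x ∈ P, g x ≤ g z := by
      intro x hx
      rw [hP] at hx
      exact (mem_hull_tight S g _ hgS hx).1
    have hfacet : IsFacet P {x ∈ P | g x = g z} := by
      refine ⟨Or.inr (Or.inr ⟨g, g z, hgP, rfl⟩), ⟨z, hSP z hzS, rfl⟩, ?_⟩
      have h1 := sdim_face S hzS g hgS
      rw [← hP] at h1
      rw [h1, hsd]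
      exact hg.2.2
    let i : ι := ⟨_, hfacet, hSP z hzS, rfl⟩
    refine ⟨i, hg.proportional (hφ0 i) fun t ht => ?_⟩
    have h1 : z + t ∈ {x ∈ P | g x = g z} ↔ z + t ∈ {x ∈ P | φ i x = φ i z} := by
      rw [← hφeq i]
    simpa [hSP _ (hTmem t ht)] using h1
  obtain ⟨-, h, hh⟩ := hz.exists_functional
  have hhT : ∀ t ∈ T, t ≠ 0 → h t < 0 := by
    intro t ht h0
    have := hh _ (hSP _ (hTmem t ht)) (by simpa using h0)
    rw [map_add] at this
    linarith
  obtain ⟨j, e, hfe, hline, t1, ht1, hft1, hz1⟩ := simplicial_cone T φ hcard hφ0 hφ h hhT f (x - z)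
    (Finset.mem_image_of_mem _ hxS) (by rw [map_sub]; linarith)
  set g : (Fin n → ℝ) →ₗ[ℝ] ℝ := ∑ i ∈ Finset.univ.erase j, φ i with hgdef
  have hgval : ∀ t, g t = ∑ i ∈ Finset.univ.erase j, φ i t := by
    intro t
    simp [hgdef]
  have hgP : ∀ x ∈ P, g x ≤ g z := fun x hx => by
    rw [hgval, hgval]
    exact Finset.sum_le_sum fun i _ => hφle i x hx
  have hgT : ∀ t ∈ T, g t ≤ 0 := fun t ht => by
    rw [hgval]
    exact Finset.sum_nonpos fun i _ => hφ0 i t ht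
  have hgz : ∀ x ∈ P, g x = g z → ∀ i, i ≠ j → φ i (x - z) = 0 := by
    intro x hx hgx i hi
    have h1 : ∑ i ∈ Finset.univ.erase j, φ i (x - z) = 0 := by
      rw [← hgval, map_sub, hgx, sub_self]
    rw [Finset.sum_eq_zero_iff_of_nonpos] at h1
    · exact h1 i (by simp [hi])
    · intro i _
      rw [map_sub]
      linarith [hφle i x hx]
  have hgT0 : ∀ t ∈ T, g t = 0 → ∀ i, i ≠ j → φ i t = 0 := by
    intro t ht h0
    simpa using hgz (z + t) (hSP _ (hTmem t ht)) (by simp [h0])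
  have hEline : ∀ x ∈ P, g x = g z → ∃ a : ℝ, x - z = a • e := by
    intro x hx hgx
    refine hline _ ?_ (hgz x hx hgx)
    rw [← hspan]
    exact vsub_mem_vectorSpan ℝ hx (hSP z hzS)
  -- The far end of the edge: the generating point on it at which `f` is largest.
  obtain ⟨t', ht', hmax⟩ := (T.filter (fun t => g t = 0)).exists_max_image (fun t => f t)
    ⟨t1, by
      rw [Finset.mem_filter, hgval]
      exact ⟨ht1, Finset.sum_eq_zero fun i hi => hz1 i (Finset.ne_of_mem_erase hi)⟩⟩
  rw [Finset.mem_filter] at ht'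
  obtain ⟨ht'T, hgt'⟩ := ht'
  have hft' : 0 < f t' := hft1.trans_le (hmax t1 (by
    rw [Finset.mem_filter, hgval]
    exact ⟨ht1, Finset.sum_eq_zero fun i hi => hz1 i (Finset.ne_of_mem_erase hi)⟩))
  have ht'0 : t' ≠ 0 := by
    rintro rfl
    simp at hft'
  refine ⟨z + t', ?_, ⟨by simpa using ht'0, {x ∈ P | g x = g z}, ⟨?_, ?_⟩,
    ⟨hSP z hzS, rfl⟩, ⟨hSP _ (hTmem t' ht'T), by simp [hgt']⟩⟩, by simpa using hft',
    j.1, j.2.1, j.2.2, fun F hF hzF hne => ?_⟩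
  -- `g + c2 • f` with small `c2 > 0` is maximal over `S` exactly at `z + t'`.
  · obtain ⟨c, hc, hle⟩ := small_step T (fun t => g t) (fun t => f t - f t') hgT
      (fun t ht h0 => by linarith [hmax t (by simp [ht, h0])])
    obtain ⟨c2, hc2, hle2⟩ : ∃ c2 : ℝ, 0 < c2 ∧ ∀ t ∈ T, t ≠ t' → g t + c2 * (f t - f t') < 0 := by
      refine ⟨c / 2, by linarith, fun t ht hne => ?_⟩
      have h1 := hle t ht
      rcases lt_or_eq_of_le (hgT t ht) with h2 | h2
      · linarith
      · have h3 : f t ≤ f t' := hmax t (by simp [ht, h2])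
        have h4 : f t ≠ f t' := by
          intro h5
          obtain ⟨a, ha⟩ := hEline (z + t) (hSP _ (hTmem t ht)) (by simp [h2])
          obtain ⟨b, hb⟩ := hEline (z + t') (hSP _ (hTmem t' ht'T)) (by simp [hgt'])
          rw [add_sub_cancel_left] at ha hb
          rw [ha, hb, map_smul, map_smul, smul_eq_mul, smul_eq_mul] at h5
          exact hne (by rw [ha, hb, mul_right_cancel₀ hfe.ne' h5])
        have h6 : c / 2 * (f t - f t') < 0 :=
          mul_neg_of_pos_of_neg (by linarith) (by linarith [lt_of_le_of_ne h3 h4])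
        linarith
    rw [hP]
    refine isVertex_of_functional (hTmem t' ht'T) (g + c2 • f) fun s hs hne => ?_
    have h1 := hle2 (s - z) (Finset.mem_image_of_mem _ hs) fun h => hne (by rw [← h]; simp)
    simp only [map_sub] at h1
    simp only [LinearMap.add_apply, LinearMap.smul_apply, smul_eq_mul, map_add, hgt']
    linarith
  · exact Or.inr (Or.inr ⟨g, g z, hgP, rfl⟩)
  · have hzE : z ∈ {x ∈ P | g x = g z} := ⟨hSP z hzS, rfl⟩
    have hmem : t' ∈ vectorSpan ℝ {x ∈ P | g x = g z} := by
      have := vsub_mem_vectorSpan ℝ (p₁ := z + t') (p₂ := z) (s := {x ∈ P | g x = g z})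
        ⟨hSP _ (hTmem t' ht'T), by simp [hgt']⟩ hzE
      simpa using this
    have hsub : vectorSpan ℝ {x ∈ P | g x = g z} ≤ Submodule.span ℝ {e} := by
      rw [vectorSpan_eq_span_vsub_set_right ℝ hzE, Submodule.span_le]
      rintro - ⟨y, ⟨hyP, hy⟩, rfl⟩
      obtain ⟨a, ha⟩ := hEline y hyP hy
      rw [SetLike.mem_coe, Submodule.mem_span_singleton]
      exact ⟨a, ha.symm⟩
    have h1 := Submodule.finrank_mono hsub
    have h2 := finrank_span_le_card (R := ℝ) ({e} : Set (Fin n → ℝ))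
    simp only [Set.toFinset_singleton, Finset.card_singleton] at h2
    have h3 : 0 < Module.finrank ℝ (vectorSpan ℝ {x ∈ P | g x = g z}) := by
      rw [Module.finrank_pos_iff_exists_ne_zero]
      exact ⟨⟨t', hmem⟩, fun h0 => ht'0 (congrArg Subtype.val h0)⟩
    rw [sdim]
    omega
  · exact hφmem ⟨F, hF, hzF⟩ t' ht'T (hgT0 t' ht'T hgt' _ fun h0 => hne (congrArg Subtype.val h0))

end Polytope

theorem stmt11 {n d : ℕ} (hd : 1 < d) (P : Set (Fin n → ℝ))
    (hP : IsPolytope P) (hdim : sdim P = d) (hsimple : IsSimplePolytope P)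
    (hex : ∃ u v : Fin n → ℝ, IsVertex P u ∧ IsVertex P v ∧ u ≠ v ∧
      Complementary P u v) :
    ∃ z z' v : Fin n → ℝ, IsVertex P z ∧ IsVertex P z' ∧ IsVertex P v ∧
      Adjacent P z z' ∧ z ≠ v ∧ Complementary P z v ∧
      (∃! F, IsFacet P F ∧ z' ∈ F ∧ v ∈ F) := by
  classical
  obtain ⟨S, hS⟩ := hP
  obtain ⟨u, v, hu, hv, -, huv⟩ := hex
  have hmem : ∀ w, IsVertex P w → w ∈ S := fun w hw => by
    rw [hS] at hw
    exact hw.mem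
  obtain ⟨-, f, hf⟩ := hv.exists_functional
  have hfin : ∀ w, IsVertex P w → {F | IsFacet P F ∧ w ∈ F}.Finite := fun w hw =>
    Set.finite_of_ncard_pos (by rw [hsimple w hw]; omega)
  obtain ⟨z, hz, hmax⟩ := (S.filter (fun w => IsVertex P w ∧ Complementary P w v)).exists_max_image
    (fun w => f w) ⟨u, by simp [hmem u hu, hu, huv]⟩
  obtain ⟨hzS, hzV, hzv⟩ := Finset.mem_filter.1 hz
  have hne : z ≠ v := by
    rintro rfl
    obtain ⟨F, hF, hzF⟩ := Set.nonempty_of_ncard_ne_zero (s := {F | IsFacet P F ∧ z ∈ F})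
      (by rw [hsimple z hzV]; omega)
    exact hzv F hF ⟨hzF, hzF⟩
  obtain ⟨z', hz', hadj, hlt, F₀, hF₀, hzF₀, hz'F⟩ := exists_better_neighbour S hS hzV (by omega)
    (hsimple z hzV) f (hmem v hv) (hf z (by rw [hS]; exact subset_convexHull ℝ _ hzS) hne)
  obtain ⟨F, hF, hz'F1, hvF⟩ : ∃ F, IsFacet P F ∧ z' ∈ F ∧ v ∈ F := by
    by_contra! hno
    have := hmax z' (by
      rw [Finset.mem_filter]
      exact ⟨hmem z' hz', hz', fun F hF h => hno F hF h.1 h.2⟩)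
    linarith
  refine ⟨z, z', v, hzV, hz', hv, hadj, hne, hzv, F, ⟨hF, hz'F1, hvF⟩, ?_⟩
  rintro G ⟨hG, hz'G, hvG⟩
  by_contra hGF
  -- Otherwise `z'` lies on `F`, `G` and `d - 1` facets through `z`: more than `d` facets.
  have hsub : insert G (insert F ({K | IsFacet P K ∧ z ∈ K} \ {F₀})) ⊆
      {K | IsFacet P K ∧ z' ∈ K} := by
    rintro K (rfl | rfl | ⟨⟨hK, hzK⟩, hK0⟩)
    · exact ⟨hG, hz'G⟩
    · exact ⟨hF, hz'F1⟩
    · exact ⟨hK, hz'F K hK hzK hK0⟩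
  have hfd : ({K | IsFacet P K ∧ z ∈ K} \ {F₀}).Finite := (hfin z hzV).sdiff
  have hFn : F ∉ {K | IsFacet P K ∧ z ∈ K} \ {F₀} := fun h => hzv F hF ⟨h.1.2, hvF⟩
  have hGn : G ∉ insert F ({K | IsFacet P K ∧ z ∈ K} \ {F₀}) := by
    rintro (h | h)
    · exact hGF h
    · exact hzv G hG ⟨h.1.2, hvG⟩
  have h1 := Set.ncard_le_ncard hsub (hfin z' hz')
  rw [Set.ncard_insert_of_notMem hGn (hfd.insert F), Set.ncard_insert_of_notMem hFn hfd,
    hsimple z' hz'] at h1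
  have h2 := Set.ncard_sdiff_singleton_add_one (s := {K | IsFacet P K ∧ z ∈ K}) (a := F₀)
    ⟨hF₀, hzF₀⟩ (hfin z hzV)
  rw [hsimple z hzV] at h2
  omega
end

section
/- Let P = {x ∈ ℝ^n | Ax = b and x ≥ 0} be a simple polytope (a bounded set of this form in which every vertex belongs to exactly d facets, where d = dim P), and let u, v be distinct vertices of P. Then u and v are adjacent if and only if the number of unordered pairs of distinct vertices {u', v'} of P with Z(u') ∩ Z(v') = Z(u) ∩ Z(v) is exactly 1. Moreover, for an arbitrary (not necessarily simple) polytope P of this form, if u and v are adjacent, then this count is exactly 1. -/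
/-- The standard-form polytope `{x | Ax = b and x ≥ 0}`. -/
def stdPolytope {m n : ℕ} (A : Matrix (Fin m) (Fin n) ℝ) (b : Fin m → ℝ) :
    Set (Fin n → ℝ) :=
  {x | A.mulVec x = b ∧ ∀ i, 0 ≤ x i}

/-- The zero set of a face: the coordinates that vanish throughout the face. -/
def zeroSet {n : ℕ} (F : Set (Fin n → ℝ)) : Set (Fin n) :=
  {i | ∀ x ∈ F, x i = 0}

/-! ### Disjoint pairs in a pseudomanifold -/

theorem even_card_of_involution {β : Type*} [DecidableEq β] (N : Finset β) (τ : β → β)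
    (hmem : ∀ a ∈ N, τ a ∈ N) (hne : ∀ a ∈ N, τ a ≠ a) (hinv : ∀ a ∈ N, τ (τ a) = a) :
    Even N.card := by
  have h : ∑ _a ∈ N, (1 : ZMod 2) = 0 :=
    Finset.sum_involution (fun a _ => τ a) (fun _ _ => by decide)
      (fun a ha _ => hne a ha) hmem hinv
  rw [Finset.sum_const, nsmul_eq_mul, mul_one] at h
  exact (ZMod.natCast_eq_zero_iff_even).1 h

/-- In a closed `(k-1)`-dimensional pseudomanifold, `k ≥ 2` (every ridge lies in exactly two facets,
here named by `X` with vertex sets `Z`), a pair of disjoint facets is never the only one. -/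
theorem exists_second_disjoint_pair {X α : Type*} [Finite X] [DecidableEq α]
    (Z : X → Finset α) (k : ℕ) (hk : 2 ≤ k) (hcard : ∀ x, (Z x).card = k)
    (hridge : ∀ x (R : Finset α), R ⊆ Z x → R.card + 1 = k → ∃! x', x' ≠ x ∧ R ⊆ Z x')
    (u v : X) (huv : Disjoint (Z u) (Z v)) :
    ∃ x y, Disjoint (Z x) (Z y) ∧ ¬ (x = u ∧ y = v) ∧ ¬ (x = v ∧ y = u) := by
  classical
  by_contra hno
  have hcon : ∀ x y, Disjoint (Z x) (Z y) → (x = u ∧ y = v) ∨ (x = v ∧ y = u) := by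
    intro x y h
    by_contra h'
    exact hno ⟨x, y, h, fun h1 => h' (Or.inl h1), fun h1 => h' (Or.inr h1)⟩
  have := Fintype.ofFinite X
  obtain ⟨g, hg⟩ : (Z u).Nonempty := by
    rw [← Finset.card_pos, hcard]; omega
  have hgv : g ∉ Z v := Finset.disjoint_left.1 huv hg
  have disj_of_card : ∀ x y, (Z x \ Z y).card = k → Disjoint (Z x) (Z y) := by
    intro x y h
    rw [← Finset.sdiff_eq_self_iff_disjoint]
    exact Finset.eq_of_subset_of_card_le Finset.sdiff_subset (by rw [h, hcard])
  -- the ordered pairs with exactly one common label, neither containing `g`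
  let N : Finset (X × X) :=
    Finset.univ.filter fun p => (Z p.1 \ Z p.2).card + 1 = k ∧ g ∉ Z p.1 ∧ g ∉ Z p.2
  have memN : ∀ x y, (x, y) ∈ N ↔ (Z x \ Z y).card + 1 = k ∧ g ∉ Z x ∧ g ∉ Z y := by
    intro x y; simp [N]
  have hother : ∀ p : X × X, ∃ x', (Z p.1 \ Z p.2).card + 1 = k →
      (x' ≠ p.1 ∧ Z p.1 \ Z p.2 ⊆ Z x') ∧
        ∀ z, z ≠ p.1 → Z p.1 \ Z p.2 ⊆ Z z → z = x' := by
    intro p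
    by_cases h : (Z p.1 \ Z p.2).card + 1 = k
    · obtain ⟨x', h1, h2⟩ := hridge p.1 _ Finset.sdiff_subset h
      exact ⟨x', fun _ => ⟨h1, fun z hz hz' => h2 z ⟨hz, hz'⟩⟩⟩
    · exact ⟨p.1, fun h' => absurd h' h⟩
  choose other hother using hother
  obtain ⟨a, ⟨hau, haR⟩, ha⟩ := hridge u ((Z u).erase g) (Finset.erase_subset _ _)
    (by rw [Finset.card_erase_of_mem hg, hcard]; omega)
  have hne_uv : v ≠ u := fun h => hgv (h ▸ hg)
  have hav : ¬ Disjoint (Z a) (Z v) := by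
    intro h
    rcases hcon a v h with h1 | h1
    · exact hau h1.1
    · exact hne_uv h1.2
  have hga : g ∉ Z a := by
    intro hga
    have hsub : Z u ⊆ Z a := by
      rw [← Finset.insert_erase hg]
      exact Finset.insert_subset hga haR
    have : Z u = Z a := Finset.eq_of_subset_of_card_le hsub (by rw [hcard, hcard])
    exact hav (this ▸ huv)
  have hsubv : (Z u).erase g ⊆ Z a \ Z v := fun i hi =>
    Finset.mem_sdiff.2 ⟨haR hi, Finset.disjoint_left.1 huv (Finset.mem_of_mem_erase hi)⟩
  have hcu : ((Z u).erase g).card + 1 = k := by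
    rw [Finset.card_erase_of_mem hg, hcard]; omega
  have hcav : (Z a \ Z v).card + 1 = k := by
    have h1 := Finset.card_le_card hsubv
    have h2 : (Z a \ Z v).card ≤ k := hcard a ▸ Finset.card_le_card Finset.sdiff_subset
    have h3 : (Z a \ Z v).card ≠ k := fun h => hav (disj_of_card _ _ h)
    omega
  have heq : Z a \ Z v = (Z u).erase g :=
    (Finset.eq_of_subset_of_card_le hsubv (by omega)).symm
  have heN : (a, v) ∈ N := (memN a v).2 ⟨hcav, hga, hgv⟩
  -- swapping the entries
  have heven : Even N.card := by
    refine even_card_of_involution N Prod.swap ?_ ?_ ?_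
    · rintro ⟨x, y⟩ h
      obtain ⟨h1, h2, h3⟩ := (memN x y).1 h
      refine (memN y x).2 ⟨?_, h3, h2⟩
      rw [Finset.card_sdiff_comm (by rw [hcard, hcard])]
      exact h1
    · rintro ⟨x, y⟩ h hs
      obtain ⟨h1, -, -⟩ := (memN x y).1 h
      obtain rfl : y = x := congrArg Prod.fst hs
      simp at h1
      omega
    · rintro ⟨x, y⟩ -
      rfl
  -- pivoting the first entry away from the common label
  have key : ∀ x y, (x, y) ∈ N.erase (a, v) →
      (other (x, y), y) ∈ N ∧ Z (other (x, y)) \ Z y = Z x \ Z y := by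
    intro x y h
    obtain ⟨hne, h⟩ := Finset.mem_erase.1 h
    obtain ⟨h1, h2, h3⟩ := (memN x y).1 h
    obtain ⟨⟨h4, h5⟩, -⟩ := hother (x, y) h1
    simp only at h4 h5
    have hsub : Z x \ Z y ⊆ Z (other (x, y)) \ Z y := fun i hi =>
      Finset.mem_sdiff.2 ⟨h5 hi, (Finset.mem_sdiff.1 hi).2⟩
    have hnd : (Z (other (x, y)) \ Z y).card ≠ k := by
      intro hd
      rcases hcon _ _ (disj_of_card _ _ hd) with ⟨h6, h7⟩ | ⟨-, h7⟩
      · subst h7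
        rw [h6] at h5 h4
        have h8 : Z x \ Z y ⊆ (Z u).erase g := fun i hi =>
          Finset.mem_erase.2 ⟨fun hig => h2 (hig ▸ (Finset.mem_sdiff.1 hi).1), h5 hi⟩
        have h9 : Z x \ Z y = (Z u).erase g := Finset.eq_of_subset_of_card_le h8 (by omega)
        exact hne (by rw [ha x ⟨h4.symm, h9 ▸ Finset.sdiff_subset⟩])
      · exact h3 (h7 ▸ hg)
    have hle : (Z (other (x, y)) \ Z y).card ≤ k :=
      hcard (other (x, y)) ▸ Finset.card_le_card Finset.sdiff_subset
    have hle2 := Finset.card_le_card hsub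
    have heq' : Z (other (x, y)) \ Z y = Z x \ Z y :=
      (Finset.eq_of_subset_of_card_le hsub (by omega)).symm
    refine ⟨(memN _ _).2 ⟨by omega, fun hgo => ?_, h3⟩, heq'⟩
    have : g ∈ Z x \ Z y := heq' ▸ Finset.mem_sdiff.2 ⟨hgo, h3⟩
    exact h2 (Finset.mem_sdiff.1 this).1
  have hinv : ∀ x y, (x, y) ∈ N.erase (a, v) → other (other (x, y), y) = x := by
    intro x y h
    obtain ⟨h1, h2⟩ := key x y h
    obtain ⟨h3, -, -⟩ := (memN _ _).1 h1
    obtain ⟨h4, -, -⟩ := (memN _ _).1 (Finset.mem_of_mem_erase h)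
    refine ((hother (other (x, y), y) h3).2 x ?_ ?_).symm
    · exact (hother (x, y) h4).1.1.symm
    · simp only [h2]
      exact Finset.sdiff_subset
  have heven' : Even (N.erase (a, v)).card := by
    refine even_card_of_involution _ (fun p => (other p, p.2)) ?_ ?_ ?_
    · rintro ⟨x, y⟩ h
      refine Finset.mem_erase.2 ⟨fun hav' => ?_, (key x y h).1⟩
      -- `(a, v)` is not reached, because pivoting it leads to `(u, v)`, where `u` has label `g`
      obtain ⟨h1, h2⟩ := Prod.mk.inj hav'
      obtain ⟨h4, h5, -⟩ := (memN _ _).1 (Finset.mem_of_mem_erase h)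
      have h6 := (hother (a, v) hcav).2 u hau.symm
        (by simp only [heq]; exact Finset.erase_subset _ _)
      have h7 := hinv x y h
      simp only at h1 h2
      rw [h1, h2, ← h6] at h7
      exact h5 (h7 ▸ hg)
    · rintro ⟨x, y⟩ h heq'
      obtain ⟨h4, -, -⟩ := (memN _ _).1 (Finset.mem_of_mem_erase h)
      exact (hother (x, y) h4).1.1 (congrArg Prod.fst heq')
    · rintro ⟨x, y⟩ h
      exact Prod.ext (hinv x y h) rfl
  rw [Finset.card_erase_of_mem heN] at heven'
  have hpos : 0 < N.card := Finset.card_pos.2 ⟨_, heN⟩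
  grind

/-! ### Presentations of a polytope inside its affine hull -/

/-- `P` is a nonnegative set whose differences lie in `D` and which is cut out of the affine
subspaces `x + D`, `x ∈ P`, by the inequalities `0 ≤ x i` with `i ∈ M`. -/
structure IsPresentation {n : ℕ} (P : Set (Fin n → ℝ)) (D : Submodule ℝ (Fin n → ℝ))
    (M : Finset (Fin n)) : Prop where
  sub_mem : ∀ x ∈ P, ∀ y ∈ P, x - y ∈ D
  add_mem : ∀ x ∈ P, ∀ w ∈ D, (∀ i ∈ M, 0 ≤ x i + w i) → x + w ∈ P
  nonneg : ∀ x ∈ P, ∀ i, 0 ≤ x i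

theorem exists_pos_step {n : ℕ} (M : Finset (Fin n)) (q w : Fin n → ℝ)
    (hq : ∀ i ∈ M, 0 ≤ q i) (hw : ∀ i ∈ M, q i = 0 → 0 ≤ w i) :
    ∃ ε > 0, ∀ i ∈ M, 0 ≤ q i + ε * w i := by
  have h : ∀ᶠ ε : ℝ in nhdsWithin 0 (Set.Ioi 0), ∀ i ∈ M, 0 ≤ q i + ε * w i := by
    rw [Filter.eventually_all_finset]
    intro i hi
    rcases (hq i hi).eq_or_lt with h0 | h0
    · filter_upwards [self_mem_nhdsWithin] with ε hε
      rw [← h0, zero_add]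
      exact mul_nonneg (le_of_lt hε) (hw i hi h0.symm)
    · have hc : Filter.Tendsto (fun ε : ℝ => q i + ε * w i) (nhdsWithin 0 (Set.Ioi 0))
          (nhds (q i + 0 * w i)) :=
        Filter.Tendsto.mono_left (Continuous.tendsto (by fun_prop) 0) nhdsWithin_le_nhds
      have := hc.eventually (lt_mem_nhds (show 0 < q i + 0 * w i by simpa using h0))
      filter_upwards [this] with ε hε using hε.le
  obtain ⟨ε, h1, h2⟩ := (h.and self_mem_nhdsWithin).exists
  exact ⟨ε, h2, h1⟩

theorem IsVertex.mem_s19 {n : ℕ} {P : Set (Fin n → ℝ)} {x : Fin n → ℝ} (h : IsVertex P x) :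
    x ∈ P := by
  rcases h with h | h | ⟨f, c, -, h⟩
  · exact absurd h (Set.singleton_ne_empty x)
  · rw [← h]; rfl
  · have : x ∈ {x ∈ P | f x = c} := h ▸ rfl
    exact this.1

/-- A vertex is an extreme point. -/
theorem IsVertex.eq_of_add_mem {n : ℕ} {P : Set (Fin n → ℝ)} {x w : Fin n → ℝ}
    (h : IsVertex P x) {s t : ℝ} (hs : 0 < s) (ht : 0 < t)
    (h1 : x + s • w ∈ P) (h2 : x - t • w ∈ P) : w = 0 := by
  have key : x + s • w = x := by
    rcases h with h | h | ⟨f, c, hle, h⟩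
    · exact absurd h (Set.singleton_ne_empty x)
    · rw [← h] at h1; exact h1
    · have hx : x ∈ {x ∈ P | f x = c} := h ▸ rfl
      have e1 := hle _ h1
      have e2 := hle _ h2
      have e3 := hx.2
      simp only [map_add, map_sub, map_smul, smul_eq_mul] at e1 e2
      have e4 : f w = 0 := by
        apply le_antisymm
        · by_contra hc; push Not at hc; nlinarith [mul_pos hs hc]
        · by_contra hc; push Not at hc; nlinarith [mul_pos ht (neg_pos.2 hc)]
      have : x + s • w ∈ ({x} : Set _) := by
        rw [h]; exact ⟨h1, by simp [e3, e4]⟩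
      exact this
  have : s • w = 0 := by simpa using key
  exact (smul_eq_zero.1 this).resolve_left hs.ne'

/-- A line contains at most two vertices. -/
theorem IsVertex.eq_or_eq_of_line {n : ℕ} {P : Set (Fin n → ℝ)} {x y z : Fin n → ℝ}
    (hx : IsVertex P x) (hy : IsVertex P y) (hz : IsVertex P z) (hxy : x ≠ y) (t : ℝ)
    (h : z - x = t • (y - x)) : z = x ∨ z = y := by
  have hyx : y - x ≠ 0 := sub_ne_zero.2 hxy.symm
  have hzeq : z = x + t • (y - x) := by rw [← h]; abel
  rcases lt_trichotomy t 0 with h0 | h0 | h0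
  · refine absurd (hx.eq_of_add_mem (w := y - x) one_pos (neg_pos.2 h0) ?_ ?_) hyx
    · convert hy.mem_s19 using 1; module
    · convert hz.mem_s19 using 1; rw [hzeq]; module
  · left; rw [hzeq, h0]; module
  rcases lt_trichotomy t 1 with h1 | h1 | h1
  · refine absurd (hz.eq_of_add_mem (w := y - x) (sub_pos.2 h1) h0 ?_ ?_) hyx
    · convert hy.mem_s19 using 1; rw [hzeq]; module
    · convert hx.mem_s19 using 1; rw [hzeq]; module
  · right; rw [hzeq, h1]; module
  · refine absurd (hy.eq_of_add_mem (w := y - x) (sub_pos.2 h1) one_pos ?_ ?_) hyx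
    · convert hz.mem_s19 using 1; rw [hzeq]; module
    · convert hx.mem_s19 using 1; module

namespace IsPresentation

variable {n : ℕ} {P : Set (Fin n → ℝ)} {D : Submodule ℝ (Fin n → ℝ)} {M : Finset (Fin n)}

/-- A direction that does not decrease the active coordinates can be followed for a while. -/
theorem exists_step (hP : IsPresentation P D M) {x w : Fin n → ℝ} (hx : x ∈ P) (hw : w ∈ D)
    (h : ∀ i ∈ M, x i = 0 → 0 ≤ w i) : ∃ ε > (0 : ℝ), x + ε • w ∈ P := by
  obtain ⟨ε, h1, h2⟩ := exists_pos_step M x w (fun i _ => hP.nonneg x hx i) h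
  exact ⟨ε, h1, hP.add_mem x hx _ (D.smul_mem ε hw) (by simpa using h2)⟩

theorem eq_zero_of_isVertex (hP : IsPresentation P D M) {x w : Fin n → ℝ} (hx : IsVertex P x)
    (hw : w ∈ D) (h : ∀ i ∈ M, x i = 0 → w i = 0) : w = 0 := by
  obtain ⟨s, hs, h1⟩ := hP.exists_step hx.mem_s19 hw (fun i hi h0 => (h i hi h0).ge)
  obtain ⟨t, ht, h2⟩ := hP.exists_step hx.mem_s19 (D.neg_mem hw)
    (fun i hi h0 => by simp [h i hi h0])
  exact hx.eq_of_add_mem hs ht h1 (by convert h2 using 1; module)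

theorem isVertex_of_forall (hP : IsPresentation P D M) {x : Fin n → ℝ} (hx : x ∈ P)
    (h : ∀ w ∈ D, (∀ i ∈ M, x i = 0 → w i = 0) → w = 0) : IsVertex P x := by
  classical
  have hf : ∀ y, (-∑ i ∈ M.filter (fun i => x i = 0), LinearMap.proj (R := ℝ)
      (φ := fun _ : Fin n => ℝ) i) y = -∑ i ∈ M.filter (fun i => x i = 0), y i := by
    intro y; simp
  refine Or.inr (Or.inr ⟨-∑ i ∈ M.filter (fun i => x i = 0), LinearMap.proj i, 0, ?_, ?_⟩)
  · intro y hy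
    rw [hf]
    exact neg_nonpos.2 (Finset.sum_nonneg fun i _ => hP.nonneg y hy i)
  · ext y
    simp only [Set.mem_singleton_iff, Set.mem_ofPred_eq, hf, neg_eq_zero]
    constructor
    · rintro rfl
      exact ⟨hx, Finset.sum_eq_zero fun i hi => (Finset.mem_filter.1 hi).2⟩
    · rintro ⟨hy, h0⟩
      rw [Finset.sum_eq_zero_iff_of_nonneg fun i _ => hP.nonneg y hy i] at h0
      refine sub_eq_zero.1 (h _ (hP.sub_mem y hy x hx) fun i hi hxi => ?_)
      rw [Pi.sub_apply, hxi, h0 i (Finset.mem_filter.2 ⟨hi, hxi⟩), sub_zero]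

/-- From a point `m` of `P`, one can move a little in `P` away from any point `z` of the minimal
face containing `m`. -/
theorem exists_step_away (hP : IsPresentation P D M) {m z : Fin n → ℝ} (hm : m ∈ P) (hz : z ∈ P)
    (h : ∀ i ∈ M, m i = 0 → z i = 0) : ∃ ε > (0 : ℝ), m + ε • (m - z) ∈ P :=
  hP.exists_step hm (hP.sub_mem m hm z hz) fun i hi h0 => by simp [h0, h i hi h0]

/-- Inclusion of zero sets may be tested on `M`. -/
theorem zero_of_zero (hP : IsPresentation P D M) {m z : Fin n → ℝ} (hm : m ∈ P) (hz : z ∈ P)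
    (h : ∀ i ∈ M, m i = 0 → z i = 0) (i : Fin n) (hi : m i = 0) : z i = 0 := by
  obtain ⟨ε, hε, hmem⟩ := hP.exists_step_away hm hz h
  have h1 := hP.nonneg _ hmem i
  have h2 := hP.nonneg z hz i
  simp only [Pi.add_apply, Pi.smul_apply, Pi.sub_apply, smul_eq_mul, hi] at h1
  nlinarith

end IsPresentation

/-! ### An irredundant subset of the coordinates -/

theorem isPresentation_univ {m n : ℕ} (A : Matrix (Fin m) (Fin n) ℝ) (b : Fin m → ℝ) :
    IsPresentation (stdPolytope A b) (LinearMap.ker A.mulVecLin) Finset.univ where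
  sub_mem x hx y hy := by simp [Matrix.mulVec_sub, hx.1, hy.1]
  add_mem x hx w hw h := by
    rw [LinearMap.mem_ker, Matrix.mulVecLin_apply] at hw
    exact ⟨by rw [Matrix.mulVec_add, hx.1, hw, add_zero], fun i => h i (Finset.mem_univ i)⟩
  nonneg x hx := hx.2

/-- A polyhedron has a presentation in its affine hull using only coordinates that are positive at
some common point. -/
theorem exists_presentation_pos {m n : ℕ} (A : Matrix (Fin m) (Fin n) ℝ) (b : Fin m → ℝ)
    (hne : (stdPolytope A b).Nonempty) :
    ∃ M, IsPresentation (stdPolytope A b) (vectorSpan ℝ (stdPolytope A b)) M ∧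
      ∃ p ∈ stdPolytope A b, ∀ i ∈ M, 0 < p i := by
  classical
  have hU := isPresentation_univ A b
  set P := stdPolytope A b with hPdef
  -- for every set of coordinates that do not vanish identically, average points of `P`
  have hp : ∀ M : Finset (Fin n), (∀ i ∈ M, ∃ x ∈ P, 0 < x i) → ∃ p ∈ P, ∀ i ∈ M, 0 < p i := by
    intro M
    induction M using Finset.induction_on with
    | empty => exact fun _ => ⟨hne.some, hne.some_mem, by simp⟩
    | insert j M _ ih =>
      intro h
      obtain ⟨p, hp, hpM⟩ := ih fun i hi => h i (Finset.mem_insert_of_mem hi)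
      obtain ⟨q, hq, hqj⟩ := h j (Finset.mem_insert_self _ _)
      have hco : ∀ i, (p + (1 / 2 : ℝ) • (q - p)) i = p i / 2 + q i / 2 := by
        intro i; simp; ring
      refine ⟨p + (1 / 2 : ℝ) • (q - p), ?_, ?_⟩
      · refine hU.add_mem p hp _ (Submodule.smul_mem _ _ (hU.sub_mem q hq p hp)) fun i _ => ?_
        have := hco i
        rw [Pi.add_apply] at this
        rw [this]
        have := hU.nonneg p hp i
        have := hU.nonneg q hq i
        positivity
      · intro i hi
        rw [hco]
        have := hU.nonneg p hp i
        have := hU.nonneg q hq i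
        rcases Finset.mem_insert.1 hi with rfl | hi
        · positivity
        · have := hpM i hi
          positivity
  refine ⟨Finset.univ.filter fun i => ∃ x ∈ P, 0 < x i, ?_, hp _ (by simp)⟩
  refine ⟨fun x hx y hy => vsub_mem_vectorSpan ℝ hx hy, fun x hx w hw h => ?_, hU.nonneg⟩
  have hwA : vectorSpan ℝ P ≤ LinearMap.ker A.mulVecLin := by
    rw [vectorSpan, Submodule.span_le]
    rintro _ ⟨x, hx, y, hy, rfl⟩
    exact hU.sub_mem x hx y hy
  refine hU.add_mem x hx w (hwA hw) fun i _ => ?_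
  by_cases hi : ∃ x ∈ P, 0 < x i
  · exact h i (by simpa using hi)
  · have hz : ∀ y ∈ P, y i = 0 := fun y hy =>
      le_antisymm (not_lt.1 fun h => hi ⟨y, hy, h⟩) (hU.nonneg y hy i)
    have hwi : vectorSpan ℝ P ≤ LinearMap.ker (LinearMap.proj (R := ℝ) i) := by
      rw [vectorSpan, Submodule.span_le]
      rintro _ ⟨x, hx, y, hy, rfl⟩
      simp [hz x hx, hz y hy]
    have : w i = 0 := hwi hw
    rw [hz x hx, this, add_zero]

/-- A minimal presentation is irredundant: for each of its coordinates, some point of `P`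
satisfies its inequality, and no other one, with equality. -/
theorem exists_irredundant {m n : ℕ} (A : Matrix (Fin m) (Fin n) ℝ) (b : Fin m → ℝ)
    (hne : (stdPolytope A b).Nonempty) :
    ∃ M, IsPresentation (stdPolytope A b) (vectorSpan ℝ (stdPolytope A b)) M ∧
      (∃ p ∈ stdPolytope A b, ∀ i ∈ M, 0 < p i) ∧
      ∀ i ∈ M, ∃ q ∈ stdPolytope A b, q i = 0 ∧ ∀ j ∈ M, j ≠ i → 0 < q j := by
  classical
  obtain ⟨M, ⟨hM, p, hp, hpM⟩, hmin⟩ :=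
    WellFounded.has_min (wellFounded_lt (α := Finset (Fin n)))
      {M | IsPresentation (stdPolytope A b) (vectorSpan ℝ (stdPolytope A b)) M ∧
        ∃ p ∈ stdPolytope A b, ∀ i ∈ M, 0 < p i} (exists_presentation_pos A b hne)
  refine ⟨M, hM, ⟨p, hp, hpM⟩, fun i hi => ?_⟩
  -- a point `x + w` violating only the inequality with index `i`
  obtain ⟨x, hx, w, hw, h1, h2⟩ : ∃ x ∈ stdPolytope A b,
      ∃ w ∈ vectorSpan ℝ (stdPolytope A b), (∀ j ∈ M.erase i, 0 ≤ x j + w j) ∧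
        x + w ∉ stdPolytope A b := by
    by_contra hcon
    push Not at hcon
    exact hmin (M.erase i) ⟨⟨hM.sub_mem, hcon, hM.nonneg⟩, p, hp,
      fun j hj => hpM j (Finset.mem_of_mem_erase hj)⟩ (Finset.erase_ssubset hi)
  have hneg : x i + w i < 0 := by
    by_contra hge
    refine h2 (hM.add_mem x hx w hw fun j hj => ?_)
    by_cases hji : j = i
    · rw [hji]; exact not_lt.1 hge
    · exact h1 j (Finset.mem_erase.2 ⟨hji, hj⟩)
  -- the segment from `p` to this point leaves `P` through the interior of the `i`-th facet
  have hpi := hpM i hi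
  have hden : 0 < p i - (x i + w i) := by linarith
  set t := p i / (p i - (x i + w i)) with ht
  have ht0 : 0 < t := by positivity
  have ht1 : t < 1 := by rw [ht, div_lt_one hden]; linarith
  have hco : ∀ j, (p + t • (x + w - p)) j = (1 - t) * p j + t * (x j + w j) := by
    intro j; simp; ring
  have hqi : (p + t • (x + w - p)) i = 0 := by
    rw [hco, ht]; field_simp; ring
  have hqj : ∀ j ∈ M, j ≠ i → 0 < (p + t • (x + w - p)) j := by
    intro j hj hji
    rw [hco]
    have := h1 j (Finset.mem_erase.2 ⟨hji, hj⟩)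
    have := mul_pos (sub_pos.2 ht1) (hpM j hj)
    positivity
  refine ⟨_, hM.add_mem p hp (t • (x + w - p)) (Submodule.smul_mem _ _ ?_) fun j hj => ?_,
    hqi, hqj⟩
  · rw [add_sub_right_comm]
    exact Submodule.add_mem _ (hM.sub_mem x hx p hp) hw
  · by_cases hji : j = i
    · rw [hji]; exact hqi.ge
    · exact (hqj j hj hji).le

/-- An irredundant coordinate defines a facet. -/
theorem isFacet_of_irredundant {n : ℕ} {P : Set (Fin n → ℝ)} {M : Finset (Fin n)}
    (hP : IsPresentation P (vectorSpan ℝ P) M) {i : Fin n} {p q : Fin n → ℝ}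
    (hp : p ∈ P) (hpi : 0 < p i) (hq : q ∈ P) (hqi : q i = 0)
    (hqM : ∀ j ∈ M, j ≠ i → 0 < q j) : IsFacet P {x ∈ P | x i = 0} := by
  refine ⟨Or.inr (Or.inr ⟨-LinearMap.proj i, 0, fun x hx => by simpa using hP.nonneg x hx i,
    by simp⟩), ⟨q, hq, hqi⟩, ?_⟩
  have hspan : vectorSpan ℝ {x ∈ P | x i = 0} =
      vectorSpan ℝ P ⊓ LinearMap.ker (LinearMap.proj (R := ℝ) (φ := fun _ => ℝ) i) := by
    apply le_antisymm
    · refine le_inf (vectorSpan_mono ℝ fun x hx => hx.1) ?_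
      rw [vectorSpan, Submodule.span_le]
      rintro _ ⟨x, hx, y, hy, rfl⟩
      simp [hx.2, hy.2]
    · rintro w ⟨hw, hwi⟩
      have hwi : w i = 0 := hwi
      obtain ⟨ε, hε, hmem⟩ := hP.exists_step hq hw fun j hj h0 => by
        by_cases hji : j = i
        · rw [hji, hwi]
        · exact absurd h0 (hqM j hj hji).ne'
      have h : (q + ε • w) - q ∈ vectorSpan ℝ {x ∈ P | x i = 0} :=
        vsub_mem_vectorSpan ℝ (s := {x ∈ P | x i = 0}) ⟨hmem, by simp [hqi, hwi]⟩ ⟨hq, hqi⟩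
      rw [add_sub_cancel_left] at h
      exact (Submodule.smul_mem_iff _ hε.ne').1 h
  let f : Module.Dual ℝ (vectorSpan ℝ P) :=
    (LinearMap.proj (R := ℝ) (φ := fun _ => ℝ) i).comp (vectorSpan ℝ P).subtype
  have hf : f ≠ 0 := by
    intro h
    have := LinearMap.congr_fun h ⟨p - q, hP.sub_mem p hp q hq⟩
    simp [f, hqi, hpi.ne'] at this
  have h1 := Module.Dual.finrank_ker_add_one_of_ne_zero hf
  have h2 : (LinearMap.ker f).map (vectorSpan ℝ P).subtype =
      vectorSpan ℝ P ⊓ LinearMap.ker (LinearMap.proj (R := ℝ) (φ := fun _ => ℝ) i) := by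
    rw [LinearMap.ker_comp, Submodule.map_comap_subtype]
  rw [sdim, sdim, hspan, ← h2, ← h1, Submodule.finrank_map_subtype_eq]

/-- At a vertex of a simple polytope at most `dim P` irredundant inequalities are tight. -/
theorem card_le_of_simple {n : ℕ} {P : Set (Fin n → ℝ)} {M : Finset (Fin n)}
    (hP : IsPresentation P (vectorSpan ℝ P) M)
    (hpos : ∃ p ∈ P, ∀ i ∈ M, 0 < p i)
    (hirr : ∀ i ∈ M, ∃ q ∈ P, q i = 0 ∧ ∀ j ∈ M, j ≠ i → 0 < q j)
    (hs : IsSimplePolytope P) (hd : sdim P ≠ 0) {x : Fin n → ℝ} (hx : IsVertex P x) :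
    (M.filter fun i => x i = 0).card ≤ sdim P := by
  classical
  obtain ⟨p, hp, hpM⟩ := hpos
  rw [← hs x hx, ← Set.ncard_coe_finset]
  refine Set.ncard_le_ncard_of_injOn (fun i => {y ∈ P | y i = 0}) ?_ ?_ ?_
  · intro i hi
    obtain ⟨hiM, hxi⟩ := Finset.mem_filter.1 (Finset.mem_coe.1 hi)
    obtain ⟨q, hq, hqi, hqM⟩ := hirr i hiM
    exact ⟨isFacet_of_irredundant hP hp (hpM i hiM) hq hqi hqM, hx.mem_s19, hxi⟩
  · intro i hi j hj hij
    obtain ⟨hiM, -⟩ := Finset.mem_filter.1 (Finset.mem_coe.1 hi)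
    obtain ⟨hjM, -⟩ := Finset.mem_filter.1 (Finset.mem_coe.1 hj)
    obtain ⟨q, hq, hqi, hqM⟩ := hirr i hiM
    have hq' : q ∈ {y ∈ P | y i = 0} := ⟨hq, hqi⟩
    by_contra hne
    have hq2 : q ∈ {y ∈ P | y j = 0} := by
      have hij' : {y ∈ P | y i = 0} = {y ∈ P | y j = 0} := hij
      rwa [hij'] at hq'
    exact (hqM j hjM (Ne.symm hne)).ne' hq2.2
  -- `ncard` of an infinite set would be `0`
  · exact Set.finite_of_ncard_ne_zero (by rw [hs x hx]; exact hd)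

/-! ### Pivoting -/

/-- The coordinates in `M` that vanish at `x`. -/
noncomputable def tight {n : ℕ} (M : Finset (Fin n)) (x : Fin n → ℝ) : Finset (Fin n) :=
  M.filter fun i => x i = 0

theorem mem_tight {n : ℕ} {M : Finset (Fin n)} {x : Fin n → ℝ} {i : Fin n} :
    i ∈ tight M x ↔ i ∈ M ∧ x i = 0 := Finset.mem_filter

namespace IsPresentation

variable {n : ℕ} {P : Set (Fin n → ℝ)} {D : Submodule ℝ (Fin n → ℝ)} {M : Finset (Fin n)}

theorem eq_of_tight_subset (hP : IsPresentation P D M) {x y : Fin n → ℝ} (hx : IsVertex P x)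
    (hy : y ∈ P) (h : tight M x ⊆ tight M y) : y = x :=
  sub_eq_zero.1 <| hP.eq_zero_of_isVertex hx (hP.sub_mem y hy x hx.mem_s19) fun i hi h0 => by
    rw [Pi.sub_apply, h0, (mem_tight.1 (h (mem_tight.2 ⟨hi, h0⟩))).2, sub_zero]

/-- The tight coordinates at a vertex span the dual of the direction space; when there are no more
than `dim D` of them, they form a basis, so the dual basis exists. -/
theorem tight_basis (hP : IsPresentation P D M) {x : Fin n → ℝ} (hx : IsVertex P x)
    (hle : (tight M x).card ≤ Module.finrank ℝ D) :
    (tight M x).card = Module.finrank ℝ D ∧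
      ∀ g ∈ tight M x, ∃ w ∈ D, w g = 1 ∧ ∀ j ∈ tight M x, j ≠ g → w j = 0 := by
  classical
  let φ : D →ₗ[ℝ] (tight M x → ℝ) :=
    LinearMap.pi fun i => (LinearMap.proj (R := ℝ) (φ := fun _ => ℝ) (i : Fin n)).comp D.subtype
  have hφ : Function.Injective φ := by
    rw [injective_iff_map_eq_zero]
    intro w hw
    refine Subtype.ext (hP.eq_zero_of_isVertex hx w.2 fun i hi h0 => ?_)
    exact congrFun hw ⟨i, mem_tight.2 ⟨hi, h0⟩⟩
  have h1 : Module.finrank ℝ D ≤ (tight M x).card := by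
    have := LinearMap.finrank_le_finrank_of_injective hφ
    simpa using this
  have h2 := le_antisymm hle h1
  refine ⟨h2, fun g hg => ?_⟩
  have hsurj : Function.Surjective φ :=
    (LinearMap.injective_iff_surjective_of_finrank_eq_finrank (by simp [h2])).1 hφ
  obtain ⟨w, hw⟩ := hsurj (Pi.single ⟨g, hg⟩ 1)
  refine ⟨w, w.2, ?_, fun j hj hjg => ?_⟩
  · have := congrFun hw ⟨g, hg⟩
    rwa [Pi.single_eq_same] at this
  · have := congrFun hw ⟨j, hj⟩
    rwa [Pi.single_eq_of_ne (by simpa using hjg)] at this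

/-- Directions keeping all but one of the tight coordinates of a vertex at zero are
proportional. -/
theorem exists_smul_eq (hP : IsPresentation P D M) {x w w' : Fin n → ℝ} (hx : IsVertex P x)
    {g : Fin n} {Q : Finset (Fin n)} (hQ : ∀ j ∈ tight M x, j ≠ g → j ∈ Q)
    (hw : w ∈ D) (hw' : w' ∈ D) (h : ∀ j ∈ Q, w j = 0) (h' : ∀ j ∈ Q, w' j = 0) (h0 : w ≠ 0) :
    ∃ c : ℝ, c • w = w' := by
  have hg : w g ≠ 0 := by
    intro hg
    refine h0 (hP.eq_zero_of_isVertex hx hw fun i hi hxi => ?_)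
    by_cases hig : i = g
    · rw [hig, hg]
    · exact h i (hQ i (mem_tight.2 ⟨hi, hxi⟩) hig)
  refine ⟨w' g / w g, sub_eq_zero.1
    (hP.eq_zero_of_isVertex hx (D.sub_mem (D.smul_mem _ hw) hw') fun i hi hxi => ?_)⟩
  by_cases hig : i = g
  · rw [hig]; simp [hg]
  · have hiQ := hQ i (mem_tight.2 ⟨hi, hxi⟩) hig
    simp [h i hiQ, h' i hiQ]

/-- The simplex pivot: dropping one tight coordinate of a nondegenerate vertex leads to exactly one
other vertex. -/
theorem existsUnique_pivot (hP : IsPresentation P D M) (hc : IsCompact P) {x : Fin n → ℝ}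
    (hx : IsVertex P x) (hle : (tight M x).card ≤ Module.finrank ℝ D)
    (Q : Finset (Fin n)) (hQ : Q ⊆ tight M x) (hQc : Q.card + 1 = Module.finrank ℝ D) :
    ∃! x', x' ≠ x ∧ IsVertex P x' ∧ Q ⊆ tight M x' := by
  classical
  obtain ⟨hcard, hdual⟩ := hP.tight_basis hx hle
  obtain ⟨g, hgQ, hgeq⟩ : ∃ g, g ∉ Q ∧ insert g Q = tight M x := by
    obtain ⟨g, hg⟩ : ∃ g, tight M x \ Q = {g} := by
      rw [← Finset.card_eq_one, Finset.card_sdiff_of_subset hQ]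
      omega
    refine ⟨g, ?_, ?_⟩
    · have : g ∈ tight M x \ Q := hg ▸ Finset.mem_singleton_self g
      exact (Finset.mem_sdiff.1 this).2
    · rw [Finset.insert_eq, ← hg, Finset.sdiff_union_of_subset hQ]
  have hgt : g ∈ tight M x := hgeq ▸ Finset.mem_insert_self g Q
  have hQmem : ∀ j ∈ tight M x, j ≠ g → j ∈ Q := fun j hj hjg =>
    (Finset.mem_insert.1 (hgeq ▸ hj)).resolve_left hjg
  obtain ⟨w, hwD, hwg, hw⟩ := hdual g hgt
  have hwQ : ∀ j ∈ Q, w j = 0 := fun j hj => hw j (hQ hj) fun h => hgQ (h ▸ hj)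
  have hxg : x g = 0 := (mem_tight.1 hgt).2
  -- the last point `y` of `P` on the ray `x + t • w`, on which `t` is the coordinate `g`
  have hKc : IsCompact (P ∩ {y | y = x + y g • w}) :=
    hc.inter_right (isClosed_eq continuous_id (by fun_prop))
  obtain ⟨y, ⟨hyP, hyray⟩, hymax⟩ := hKc.exists_isMaxOn (f := fun y => y g)
    ⟨x, hx.mem_s19, by simp [hxg]⟩ (by fun_prop)
  have hyray : y = x + y g • w := hyray
  have hmax : ∀ t : ℝ, x + t • w ∈ P → t ≤ y g := by
    intro t ht
    have := hymax (show x + t • w ∈ P ∩ {y | y = x + y g • w} from ⟨ht, by simp [hxg, hwg]⟩)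
    simpa [hxg, hwg] using this
  have hyg : 0 < y g := by
    obtain ⟨ε, hε, hmem⟩ := hP.exists_step hx.mem_s19 hwD fun i hi h0 => by
      by_cases hig : i = g
      · rw [hig, hwg]; exact zero_le_one
      · exact (hw i (mem_tight.2 ⟨hi, h0⟩) hig).ge
    exact hε.trans_le (hmax ε hmem)
  -- the inequality that stops the ray
  obtain ⟨h, hhM, hyh, hwh⟩ : ∃ h ∈ M, y h = 0 ∧ w h < 0 := by
    by_contra hcon
    push Not at hcon
    obtain ⟨ε, hε, hmem⟩ := hP.exists_step hyP hwD hcon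
    have heq : y + ε • w = x + (y g + ε) • w := by
      conv_lhs => rw [hyray]
      module
    rw [heq] at hmem
    have := hmax _ hmem
    linarith
  have hQy : Q ⊆ tight M y := by
    intro j hj
    obtain ⟨hjM, hxj⟩ := mem_tight.1 (hQ hj)
    refine mem_tight.2 ⟨hjM, ?_⟩
    rw [hyray]
    simp [hxj, hwQ j hj]
  have hw0 : w ≠ 0 := by
    rintro rfl
    simp at hwg
  have hyx : y ≠ x := by
    intro hyx
    rw [hyx, hxg] at hyg
    exact lt_irrefl _ hyg
  have hyv : IsVertex P y := by
    refine hP.isVertex_of_forall hyP fun z hzD hz => ?_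
    obtain ⟨c, rfl⟩ := hP.exists_smul_eq hx hQmem hwD hzD hwQ
      (fun j hj => hz j (mem_tight.1 (hQ hj)).1 (mem_tight.1 (hQy hj)).2) hw0
    have := hz h hhM hyh
    rw [Pi.smul_apply, smul_eq_mul] at this
    rw [(mul_eq_zero.1 this).resolve_right hwh.ne, zero_smul]
  refine ⟨y, ⟨hyx, hyv, hQy⟩, ?_⟩
  rintro z ⟨hzx, hzv, hQz⟩
  obtain ⟨c, hcz⟩ := hP.exists_smul_eq hx hQmem (hP.sub_mem y hyP x hx.mem_s19)
    (hP.sub_mem z hzv.mem_s19 x hx.mem_s19)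
    (fun j hj => by simp [(mem_tight.1 (hQ hj)).2, (mem_tight.1 (hQy hj)).2])
    (fun j hj => by simp [(mem_tight.1 (hQ hj)).2, (mem_tight.1 (hQz hj)).2])
    (sub_ne_zero.2 hyx)
  exact (hx.eq_or_eq_of_line hyv hzv hyx.symm c hcz.symm).resolve_left hzx

/-- If only one tight coordinate of `u` does not vanish at `v`, then `u` and `v` span an edge. -/
theorem adjacent_of_tight (hP : IsPresentation P D M) {u v : Fin n → ℝ}
    (hu : IsVertex P u) (hv : IsVertex P v) (huv : u ≠ v) {g : Fin n}
    (hg : ∀ j ∈ tight M u, j ≠ g → v j = 0) : Adjacent P u v := by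
  classical
  set S := tight M u ∩ tight M v with hS
  have hSu : ∀ j ∈ S, u j = 0 := fun j hj => (mem_tight.1 (Finset.mem_inter.1 hj).1).2
  have hSv : ∀ j ∈ S, v j = 0 := fun j hj => (mem_tight.1 (Finset.mem_inter.1 hj).2).2
  have hf : ∀ y, (-∑ i ∈ S, LinearMap.proj (R := ℝ)
      (φ := fun _ : Fin n => ℝ) i) y = -∑ i ∈ S, y i := by
    intro y; simp
  have huF : u ∈ {z ∈ P | ∀ j ∈ S, z j = 0} := ⟨hu.mem_s19, hSu⟩
  have hvF : v ∈ {z ∈ P | ∀ j ∈ S, z j = 0} := ⟨hv.mem_s19, hSv⟩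
  refine ⟨huv, {z ∈ P | ∀ j ∈ S, z j = 0}, ⟨Or.inr (Or.inr
    ⟨-∑ i ∈ S, LinearMap.proj i, 0, fun y hy => ?_, ?_⟩), ?_⟩, huF, hvF⟩
  · rw [hf]
    exact neg_nonpos.2 (Finset.sum_nonneg fun i _ => hP.nonneg y hy i)
  · ext y
    simp only [Set.mem_ofPred_eq, hf, neg_eq_zero]
    refine and_congr_right fun hy => ?_
    rw [Finset.sum_eq_zero_iff_of_nonneg fun i _ => hP.nonneg y hy i]
  · have hle : vectorSpan ℝ {z ∈ P | ∀ j ∈ S, z j = 0} ≤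
        D ⊓ ⨅ j ∈ S, LinearMap.ker (LinearMap.proj (R := ℝ) (φ := fun _ => ℝ) j) := by
      rw [vectorSpan, Submodule.span_le]
      rintro _ ⟨x, hx, y, hy, rfl⟩
      refine ⟨hP.sub_mem x hx.1 y hy.1, ?_⟩
      simp only [SetLike.mem_coe, Submodule.mem_iInf]
      intro j hj
      simp [hx.2 j hj, hy.2 j hj]
    have hle' : ∀ w ∈ vectorSpan ℝ {z ∈ P | ∀ j ∈ S, z j = 0}, w ∈ D ∧ ∀ j ∈ S, w j = 0 := by
      intro w hw
      obtain ⟨h1, h2⟩ := hle hw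
      simp only [SetLike.mem_coe, Submodule.mem_iInf] at h2
      exact ⟨h1, fun j hj => h2 j hj⟩
    have hmem := vsub_mem_vectorSpan ℝ hvF huF
    have hne : v - u ≠ 0 := sub_ne_zero.2 huv.symm
    refine finrank_eq_one ⟨_, hmem⟩ (by simpa [Subtype.ext_iff] using hne) fun w => ?_
    obtain ⟨c, hc⟩ := hP.exists_smul_eq hu (g := g) (Q := S)
      (fun j hj hjg => Finset.mem_inter.2 ⟨hj, mem_tight.2 ⟨(mem_tight.1 hj).1, hg j hj hjg⟩⟩)
      (hle' _ hmem).1 (hle' _ w.2).1 (hle' _ hmem).2 (hle' _ w.2).2 hne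
    exact ⟨c, Subtype.ext hc⟩

end IsPresentation

/-! ### Pairs of vertices with a given join -/

theorem mem_zeroSet_singleton {n : ℕ} {x : Fin n → ℝ} {i : Fin n} :
    i ∈ zeroSet {x} ↔ x i = 0 := by
  simp [zeroSet]

theorem midpoint_mem {m n : ℕ} {A : Matrix (Fin m) (Fin n) ℝ} {b : Fin m → ℝ} {x y : Fin n → ℝ}
    (hx : x ∈ stdPolytope A b) (hy : y ∈ stdPolytope A b) :
    midpoint ℝ x y ∈ stdPolytope A b ∧ ∀ i, midpoint ℝ x y i = 0 ↔ x i = 0 ∧ y i = 0 := by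
  have hco : ∀ i, midpoint ℝ x y i = (x i + y i) / 2 := by
    intro i
    simp [midpoint_eq_smul_add]
    ring
  refine ⟨⟨?_, fun i => ?_⟩, fun i => ?_⟩
  · rw [midpoint_eq_smul_add, Matrix.mulVec_smul, Matrix.mulVec_add, hx.1, hy.1, ← two_smul ℝ b,
      smul_smul]
    simp
  · rw [hco]
    linarith [hx.2 i, hy.2 i]
  · rw [hco]
    have := hx.2 i
    have := hy.2 i
    constructor
    · intro h
      constructor <;> linarith
    · rintro ⟨h1, h2⟩
      rw [h1, h2]; norm_num

theorem isCompact_stdPolytope {m n : ℕ} (A : Matrix (Fin m) (Fin n) ℝ) (b : Fin m → ℝ)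
    (h : Bornology.IsBounded (stdPolytope A b)) : IsCompact (stdPolytope A b) := by
  refine Metric.isCompact_of_isClosed_isBounded ?_ h
  have h1 : IsClosed {x : Fin n → ℝ | A.mulVec x = b} :=
    isClosed_eq (by fun_prop) continuous_const
  have h2 : IsClosed {x : Fin n → ℝ | ∀ i, 0 ≤ x i} := by
    rw [Set.ofPred_forall]
    exact isClosed_iInter fun i => isClosed_le continuous_const (continuous_apply i)
  exact h1.inter h2

/-- A face containing two points contains the minimal face spanned by them. -/
theorem mem_face_of_zeroSet {m n : ℕ} {A : Matrix (Fin m) (Fin n) ℝ} {b : Fin m → ℝ}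
    {F : Set (Fin n → ℝ)} (hF : IsFace (stdPolytope A b) F) {u v z : Fin n → ℝ}
    (hu : u ∈ F) (hv : v ∈ F) (hz : z ∈ stdPolytope A b)
    (h : ∀ i, u i = 0 → v i = 0 → z i = 0) : z ∈ F := by
  rcases hF with rfl | rfl | ⟨f, c, hle, rfl⟩
  · exact hu.elim
  · exact hz
  · obtain ⟨hm, hmz⟩ := midpoint_mem hu.1 hv.1
    obtain ⟨ε, hε, hmem⟩ := (isPresentation_univ A b).exists_step_away hm hz
      fun i _ hi => h i ((hmz i).1 hi).1 ((hmz i).1 hi).2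
    have h1 := hle _ hmem
    have h2 : f (midpoint ℝ u v) = c := by
      rw [midpoint_eq_smul_add, map_smul, map_add, hu.2, hv.2, smul_eq_mul]
      simp
      ring
    rw [map_add, map_smul, map_sub, h2, smul_eq_mul] at h1
    refine ⟨hz, le_antisymm (hle z hz) ?_⟩
    by_contra hlt
    push Not at hlt
    nlinarith [mul_pos hε (sub_pos.2 hlt)]

/-- The unordered pairs of distinct vertices of `P` with the same join as `u` and `v`. -/
def joinPairs {n : ℕ} (P : Set (Fin n → ℝ)) (u v : Fin n → ℝ) : Set (Set (Fin n → ℝ)) :=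
  {p : Set (Fin n → ℝ) | ∃ u' v' : Fin n → ℝ, u' ≠ v' ∧
    IsVertex P u' ∧ IsVertex P v' ∧
    zeroSet {u'} ∩ zeroSet {v'} = zeroSet {u} ∩ zeroSet {v} ∧
    p = {u', v'}}

theorem joinPairs_of_adjacent {m n : ℕ} {A : Matrix (Fin m) (Fin n) ℝ} {b : Fin m → ℝ}
    {u v : Fin n → ℝ} (hu : IsVertex (stdPolytope A b) u) (hv : IsVertex (stdPolytope A b) v)
    (h : Adjacent (stdPolytope A b) u v) : (joinPairs (stdPolytope A b) u v).ncard = 1 := by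
  obtain ⟨huv, F, ⟨hF, hdim⟩, huF, hvF⟩ := h
  have hvu : v - u ≠ 0 := sub_ne_zero.2 huv.symm
  have key : ∀ z, IsVertex (stdPolytope A b) z → (∀ i, u i = 0 → v i = 0 → z i = 0) →
      z = u ∨ z = v := by
    intro z hz h0
    have hzF := mem_face_of_zeroSet hF huF hvF hz.mem_s19 h0
    obtain ⟨c, hc⟩ := (finrank_eq_one_iff_of_nonzero'
      (⟨v - u, vsub_mem_vectorSpan ℝ hvF huF⟩ : vectorSpan ℝ F)
      (by simpa [Subtype.ext_iff] using hvu)).1 hdim ⟨z - u, vsub_mem_vectorSpan ℝ hzF huF⟩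
    exact hu.eq_or_eq_of_line hv hz huv c (congrArg Subtype.val hc).symm
  rw [Set.ncard_eq_one]
  refine ⟨{u, v}, Set.eq_singleton_iff_unique_mem.2 ⟨⟨u, v, huv, hu, hv, rfl, rfl⟩, ?_⟩⟩
  rintro _ ⟨x, y, hxy, hx, hy, hZ, rfl⟩
  have hZ' : ∀ i, u i = 0 → v i = 0 → x i = 0 ∧ y i = 0 := by
    intro i h1 h2
    have : i ∈ zeroSet {x} ∩ zeroSet {y} := by
      rw [hZ]
      exact ⟨mem_zeroSet_singleton.2 h1, mem_zeroSet_singleton.2 h2⟩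
    exact ⟨mem_zeroSet_singleton.1 this.1, mem_zeroSet_singleton.1 this.2⟩
  rcases key x hx fun i h1 h2 => (hZ' i h1 h2).1 with rfl | rfl <;>
  rcases key y hy fun i h1 h2 => (hZ' i h1 h2).2 with rfl | rfl
  · exact absurd rfl hxy
  · rfl
  · exact Set.pair_comm _ _
  · exact absurd rfl hxy

/-- In a simple polytope, a nonadjacent pair of vertices is accompanied by a second pair with the
same join. -/
theorem exists_second_pair {m n : ℕ} {A : Matrix (Fin m) (Fin n) ℝ} {b : Fin m → ℝ}
    (hbdd : Bornology.IsBounded (stdPolytope A b)) (hs : IsSimplePolytope (stdPolytope A b))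
    {u v : Fin n → ℝ} (hu : IsVertex (stdPolytope A b) u) (hv : IsVertex (stdPolytope A b) v)
    (huv : u ≠ v) (hadj : ¬ Adjacent (stdPolytope A b) u v) :
    ∃ x y, x ≠ y ∧ IsVertex (stdPolytope A b) x ∧ IsVertex (stdPolytope A b) y ∧
      zeroSet {x} ∩ zeroSet {y} = zeroSet {u} ∩ zeroSet {v} ∧
      ¬ (x = u ∧ y = v) ∧ ¬ (x = v ∧ y = u) := by
  classical
  obtain ⟨M, hM, hpos, hirr⟩ := exists_irredundant A b ⟨u, hu.mem_s19⟩
  have hc := isCompact_stdPolytope A b hbdd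
  set P := stdPolytope A b with hPdef
  have hd : sdim P ≠ 0 := by
    intro h0
    rw [sdim, Submodule.finrank_eq_zero] at h0
    have := vsub_mem_vectorSpan ℝ hu.mem_s19 hv.mem_s19
    rw [h0, Submodule.mem_bot] at this
    exact huv (sub_eq_zero.1 this)
  have hle : ∀ x, IsVertex P x → (tight M x).card ≤ Module.finrank ℝ (vectorSpan ℝ P) :=
    fun x hx => card_le_of_simple hM hpos hirr hs hd hx
  have hcard : ∀ x, IsVertex P x → (tight M x).card = Module.finrank ℝ (vectorSpan ℝ P) :=
    fun x hx => (hM.tight_basis hx (hle x hx)).1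
  set d := Module.finrank ℝ (vectorSpan ℝ P)
  set S := tight M u ∩ tight M v with hS
  have hSu : S ⊆ tight M u := Finset.inter_subset_left
  have hSv : S ⊆ tight M v := Finset.inter_subset_right
  -- the minimal face containing `u` and `v` has dimension at least two
  have hk : S.card + 2 ≤ d := by
    have h1 : (tight M u \ S).card = d - S.card := by
      rw [Finset.card_sdiff_of_subset hSu, hcard u hu]
    by_contra hlt
    have h2 : (tight M u \ S).card ≤ 1 := by omega
    obtain ⟨g, hg⟩ : ∃ g, g ∈ tight M u \ S := by
      by_contra hno
      push Not at hno
      refine huv (hM.eq_of_tight_subset hu hv.mem_s19 fun i hi => ?_).symm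
      by_contra hiv
      exact hno i (Finset.mem_sdiff.2 ⟨hi, fun h => hiv (hSv h)⟩)
    refine hadj (hM.adjacent_of_tight hu hv huv (g := g) fun j hj hjg => ?_)
    by_contra hvj
    refine hjg (Finset.card_le_one.1 h2 j (Finset.mem_sdiff.2 ⟨hj, fun h => ?_⟩) g hg)
    exact hvj (mem_tight.1 (hSv h)).2
  let X := {x // IsVertex P x ∧ S ⊆ tight M x}
  have hfin : Finite X := by
    refine Finite.of_injective (fun x : X => tight M x.1) fun x y hxy => Subtype.ext ?_
    exact (hM.eq_of_tight_subset x.2.1 y.2.1.mem_s19 (Eq.subset hxy)).symm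
  have hdisj : ∀ x y : X, Disjoint (tight M x.1 \ S) (tight M y.1 \ S) ↔
      tight M x.1 ∩ tight M y.1 = S := by
    intro x y
    have hsd : (tight M x.1 \ S) ∩ (tight M y.1 \ S) = (tight M x.1 ∩ tight M y.1) \ S := by
      ext i; simp only [Finset.mem_inter, Finset.mem_sdiff]; tauto
    rw [Finset.disjoint_iff_inter_eq_empty, hsd, Finset.sdiff_eq_empty_iff_subset]
    exact ⟨fun h => h.antisymm (Finset.subset_inter x.2.2 y.2.2), fun h => h.subset⟩
  obtain ⟨x, y, h1, h2, h3⟩ := exists_second_disjoint_pair (fun x : X => tight M x.1 \ S)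
    (d - S.card) (by omega)
    (fun x => by rw [Finset.card_sdiff_of_subset x.2.2, hcard x.1 x.2.1])
    (by
      rintro ⟨x, hx, hSx⟩ R hR hRc
      have hRS : Disjoint R S := Finset.disjoint_of_subset_left hR Finset.sdiff_disjoint
      obtain ⟨x', ⟨h1, h2, h3⟩, h4⟩ := hM.existsUnique_pivot hc hx (hle x hx) (R ∪ S)
        (Finset.union_subset (hR.trans Finset.sdiff_subset) hSx)
        (by rw [Finset.card_union_of_disjoint hRS]; omega)
      refine ⟨⟨x', h2, Finset.subset_union_right.trans h3⟩, ⟨fun h => h1 (congrArg Subtype.val h),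
        Finset.subset_sdiff.2 ⟨Finset.subset_union_left.trans h3, hRS⟩⟩, ?_⟩
      rintro ⟨z, hz, hSz⟩ ⟨h5, h6⟩
      refine Subtype.ext (h4 z ⟨fun h => h5 (Subtype.ext h), hz, ?_⟩)
      exact Finset.union_subset (h6.trans Finset.sdiff_subset) hSz)
    ⟨u, hu, hSu⟩ ⟨v, hv, hSv⟩ ((hdisj ⟨u, hu, hSu⟩ ⟨v, hv, hSv⟩).2 rfl)
  have hxyS := (hdisj x y).1 h1
  refine ⟨x.1, y.1, ?_, x.2.1, y.2.1, ?_, fun h => h2 ⟨Subtype.ext h.1, Subtype.ext h.2⟩,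
    fun h => h3 ⟨Subtype.ext h.1, Subtype.ext h.2⟩⟩
  · intro hxy
    rw [← hxy, Finset.inter_self] at hxyS
    have := hcard x.1 x.2.1
    rw [hxyS] at this
    omega
  -- equality of the zero sets within `M` propagates to all coordinates, via the midpoints
  · obtain ⟨hm, hmz⟩ := midpoint_mem x.2.1.mem_s19 y.2.1.mem_s19
    obtain ⟨hm', hmz'⟩ := midpoint_mem hu.mem_s19 hv.mem_s19
    have hiff : ∀ i ∈ M, (x.1 i = 0 ∧ y.1 i = 0) ↔ (u i = 0 ∧ v i = 0) := by
      intro i hi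
      have : i ∈ tight M x.1 ∩ tight M y.1 ↔ i ∈ tight M u ∩ tight M v := by rw [hxyS]
      simpa [mem_tight, hi] using this
    ext i
    simp only [Set.mem_inter_iff, mem_zeroSet_singleton]
    rw [← hmz, ← hmz']
    exact ⟨hM.zero_of_zero hm hm' (fun j hj h => (hmz' j).2 ((hiff j hj).1 ((hmz j).1 h))) i,
      hM.zero_of_zero hm' hm (fun j hj h => (hmz j).2 ((hiff j hj).2 ((hmz' j).1 h))) i⟩

theorem stmt19 {m n : ℕ} (A : Matrix (Fin m) (Fin n) ℝ) (b : Fin m → ℝ)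
    (P : Set (Fin n → ℝ)) (hP : P = stdPolytope A b)
    (hbdd : Bornology.IsBounded P)
    (u v : Fin n → ℝ) (hu : IsVertex P u) (hv : IsVertex P v) (huv : u ≠ v) :
    (IsSimplePolytope P →
      (Adjacent P u v ↔
        {p : Set (Fin n → ℝ) | ∃ u' v' : Fin n → ℝ, u' ≠ v' ∧
          IsVertex P u' ∧ IsVertex P v' ∧
          zeroSet {u'} ∩ zeroSet {v'} = zeroSet {u} ∩ zeroSet {v} ∧
          p = {u', v'}}.ncard = 1)) ∧
    (Adjacent P u v →
      {p : Set (Fin n → ℝ) | ∃ u' v' : Fin n → ℝ, u' ≠ v' ∧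
        IsVertex P u' ∧ IsVertex P v' ∧
        zeroSet {u'} ∩ zeroSet {v'} = zeroSet {u} ∩ zeroSet {v} ∧
        p = {u', v'}}.ncard = 1) := by
  subst hP
  refine ⟨fun hs => ⟨joinPairs_of_adjacent hu hv, fun hone => ?_⟩, joinPairs_of_adjacent hu hv⟩
  by_contra hadj
  obtain ⟨x, y, hxy, hx, hy, hZ, h1, h2⟩ := exists_second_pair hbdd hs hu hv huv hadj
  obtain ⟨p, hp⟩ := Set.ncard_eq_one.1 hone
  have e1 : ({u, v} : Set (Fin n → ℝ)) ∈ ({p} : Set _) := hp ▸ ⟨u, v, huv, hu, hv, rfl, rfl⟩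
  have e2 : ({x, y} : Set (Fin n → ℝ)) ∈ ({p} : Set _) := hp ▸ ⟨x, y, hxy, hx, hy, hZ, rfl⟩
  have e3 : ({x, y} : Set (Fin n → ℝ)) = {u, v} :=
    (Set.mem_singleton_iff.1 e2).trans (Set.mem_singleton_iff.1 e1).symm
  rcases Set.pair_eq_pair_iff.1 e3 with h | h
  · exact h1 h
  · exact h2 h
end
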